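/- arXiv:1403.1441 — 3 statements merged into one kernel-verified Lean document; each statement's English description precedes it below -/
import Mathlib

section
/- Let X = (X_1, X_2, …) be a sequence of ℝ^d-valued random vectors with partial sums S_n := X_1 + … + X_n, let A_n be invertible d×d real matrices with A_{n+1} A_n^{−1} → I, and let b_n ∈ ℝ^d; assume (i) X is strongly mixing, (ii) the triangular array (A_n X_j : 1 ≤ j ≤ n, n ≥ 1) is infinitesimal, and (iii) the distributions of A_n S_n + b_n converge weakly to a full probability measure μ on ℝ^d. Then for every nonzero idempotent matrix J ∈ D(μ) and every c with 0 < c < 1, there exists a matrix K_c ∈ D(μ) such that det_J K_c = c. -/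
/-!
Write `Z_n = A_n S_n + b_n`. By infinitesimality, dropping from `S_n` a block of bounded length
following the first `m` terms is asymptotically harmless, and by strong mixing what comes after the
block is nearly independent of what comes before it. Hence `Z_n` is asymptotically the sum of the
independent vectors `A_n A_m⁻¹ Z_m` and `Z_n - A_n A_m⁻¹ Z_m` as `m → ∞`, `m ≤ n`, and every limit
of the matrices `A_n A_m⁻¹` lies in `D(μ)`. Since `μ` is full, these matrices are bounded, and
infinitesimality forces `A_n → 0`.

Let `f` be continuous with `f 0 < c < f 1`. For fixed `k` and large `n`, the value
`f (A_n A_m⁻¹)` is below `c` at `m = k`, because `A_n → 0`, and above `c` at `m = n`. It crosses `c`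
at some `m`, and a limit point `K` of the matrices at the crossings, with `k → ∞`, satisfies
`f K = c` because `A_{m+1} A_m⁻¹ → 1`. For a nonzero idempotent `J`, this applies to `f = det_J`.
-/

open MeasureTheory Filter Topology Matrix

/-- Convolution of two Borel measures on `ℝ^d`. -/
noncomputable def mconv {d : ℕ} (μ ν : Measure (Fin d → ℝ)) : Measure (Fin d → ℝ) :=
  (μ.prod ν).map (fun p => p.1 + p.2)

/-- The Urbanik decomposability semigroup `D(μ)`: all matrices `A` such that
`μ = (A_*μ) ∗ ν` for some probability measure `ν`. -/
def UrbanikD {d : ℕ} (μ : Measure (Fin d → ℝ)) : Set (Matrix (Fin d) (Fin d) ℝ) :=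
  {A | ∃ ν : Measure (Fin d → ℝ), IsProbabilityMeasure ν ∧ μ = mconv (μ.map A.mulVec) ν}

/-- A measure on `ℝ^d` is full if its support is not contained in any hyperplane,
i.e. no translate `v + L` of a proper linear subspace `L` carries all of its mass. -/
def IsFull {d : ℕ} (μ : Measure (Fin d → ℝ)) : Prop :=
  ∀ (v : Fin d → ℝ) (L : Submodule ℝ (Fin d → ℝ)), L ≠ ⊤ → μ {x | x - v ∈ L} < 1

/-- Weak convergence of a sequence of measures on `ℝ^d`. -/
def WeakLim {d : ℕ} (μs : ℕ → Measure (Fin d → ℝ)) (μ : Measure (Fin d → ℝ)) : Prop :=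
  ∀ f : BoundedContinuousFunction (Fin d → ℝ) ℝ,
    Tendsto (fun n => ∫ x, f x ∂(μs n)) atTop (𝓝 (∫ x, f x ∂μ))

/-- Partial sums `S_n = X_1 + ... + X_n`. -/
def partialSum {Ω : Type*} {d : ℕ} (X : ℕ → Ω → (Fin d → ℝ)) (n : ℕ) (ω : Ω) :
    Fin d → ℝ :=
  ∑ j ∈ Finset.Icc 1 n, X j ω

/-- The triangular array `(A_n X_j : 1 ≤ j ≤ n, n ≥ 1)` is infinitesimal:
`sup_{1 ≤ j ≤ n} P(‖A_n X_j‖ ≥ ε) → 0` as `n → ∞`, for every `ε > 0`. -/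
def Infinitesimal {Ω : Type*} [MeasurableSpace Ω] {d : ℕ} (P : Measure Ω)
    (A : ℕ → Matrix (Fin d) (Fin d) ℝ) (X : ℕ → Ω → (Fin d → ℝ)) : Prop :=
  ∀ ε > (0 : ℝ), ∀ δ > (0 : ℝ), ∃ N : ℕ, ∀ n ≥ N, ∀ j : ℕ, 1 ≤ j → j ≤ n →
    (P {ω | ε ≤ ‖(A n).mulVec (X j ω)‖}).toReal < δ

/-- Rosenblatt's measure of dependence `α(𝒜, ℬ)` between two sub-σ-fields. -/
noncomputable def alphaSig {Ω : Type*} [MeasurableSpace Ω] (P : Measure Ω)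
    (m₁ m₂ : MeasurableSpace Ω) : ℝ :=
  sSup {r | ∃ A B : Set Ω, MeasurableSet[m₁] A ∧ MeasurableSet[m₂] B ∧
    r = |(P (A ∩ B)).toReal - (P A).toReal * (P B).toReal|}

/-- The strong mixing coefficient `α(X; n) = sup_{j ≥ 1} α(σ(X_k, 1 ≤ k ≤ j), σ(X_k, k ≥ j+n))`. -/
noncomputable def alphaMix {Ω : Type*} [MeasurableSpace Ω] {d : ℕ} (P : Measure Ω)
    (X : ℕ → Ω → (Fin d → ℝ)) (n : ℕ) : ℝ :=
  ⨆ j : {j : ℕ // 1 ≤ j}, alphaSig P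
    (⨆ k ∈ Set.Icc 1 (j : ℕ), MeasurableSpace.comap (X k) inferInstance)
    (⨆ k ∈ Set.Ici ((j : ℕ) + n), MeasurableSpace.comap (X k) inferInstance)

/-- The sequence `X = (X_1, X_2, ...)` is strongly mixing: `α(X; n) → 0`. -/
def StronglyMixing {Ω : Type*} [MeasurableSpace Ω] {d : ℕ} (P : Measure Ω)
    (X : ℕ → Ω → (Fin d → ℝ)) : Prop :=
  Tendsto (alphaMix P X) atTop (𝓝 0)

/-- `det_J A`: the determinant of the restriction of `J A J` to the subspace
`J(ℝ^d)` (the range of `J`), which `J A J` maps into itself. -/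
noncomputable def detJ {d : ℕ} (J A : Matrix (Fin d) (Fin d) ℝ) : ℝ :=
  LinearMap.det ((J * A * J).mulVecLin.restrict
    (p := LinearMap.range J.mulVecLin) (q := LinearMap.range J.mulVecLin)
    (fun x _ => ⟨(A * J).mulVecLin x, by
      simp [← Matrix.mulVecLin_mul, ← Matrix.mul_assoc]⟩))

section CharacteristicFunction

variable {E : Type*} [NormedAddCommGroup E] [NormedSpace ℝ E] [MeasurableSpace E]

lemma charFunDual_zero (ρ : Measure E) [IsProbabilityMeasure ρ] : charFunDual ρ 0 = 1 := by
  simp [charFunDual_apply]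

lemma norm_charFunDual_le_one (ρ : Measure E) [IsProbabilityMeasure ρ] (L : StrongDual ℝ E) :
    ‖charFunDual ρ L‖ ≤ 1 := by
  simpa [charFunDual_apply, Complex.norm_exp_ofReal_mul_I] using
    norm_integral_le_of_norm_le_const (μ := ρ) (f := fun x => Complex.exp (L x * Complex.I))
      (C := 1) (by simp [Complex.norm_exp_ofReal_mul_I])

lemma charFunDual_map_eq_integral [BorelSpace E] {Ω : Type*} [MeasurableSpace Ω] {P : Measure Ω}
    {Y : Ω → E} (hY : AEMeasurable Y P) (L : StrongDual ℝ E) :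
    charFunDual (P.map Y) L = ∫ ω, (Circle.exp (L (Y ω)) : ℂ) ∂P := by
  rw [charFunDual_apply, integral_map hY (by fun_prop)]
  rfl

theorem continuous_charFunDual [FiniteDimensional ℝ E] [BorelSpace E] :
    Continuous fun p : ProbabilityMeasure E × StrongDual ℝ E =>
      charFunDual (p.1 : Measure E) p.2 := by
  have : ProperSpace E := FiniteDimensional.proper ℝ E
  -- The pairing `ρ̂(L)` is the integral of a single bounded function against `ρ ⊗ δ_L`.
  let f : BoundedContinuousFunction (E × StrongDual ℝ E) ℂ :=
    .ofNormedAddCommGroup (fun q => (Circle.exp (q.2 q.1) : ℂ)) (by fun_prop) 1 (by simp)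
  have hf : ∀ p : ProbabilityMeasure E × StrongDual ℝ E,
      charFunDual (p.1 : Measure E) p.2 = ∫ q, f q ∂(p.1.prod (diracProba p.2) : Measure _) := by
    intro p
    rw [ProbabilityMeasure.toMeasure_prod, integral_prod _ (f.integrable _)]
    simp [charFunDual_apply, diracProba, f]
  simp_rw [hf]
  refine continuous_iff_continuousAt.2 fun p => ?_
  exact (ProbabilityMeasure.tendsto_iff_forall_integral_rclike_tendsto ℂ).1
    (((ProbabilityMeasure.continuous_prod (α := E) (β := StrongDual ℝ E)).comp
      (continuous_fst.prodMk (continuous_diracProba.comp continuous_snd))).tendsto p) f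

lemma eq_zero_of_forall_circleExp_div_eq_one {t : ℝ}
    (ht : ∀ n : ℕ, Circle.exp (t / (n + 1)) = 1) : t = 0 := by
  have hlim : Tendsto (fun n : ℕ => t / (n + 1)) atTop (𝓝 0) := by
    simpa [div_eq_mul_one_div t] using tendsto_one_div_add_atTop_nhds_zero_nat.const_mul t
  obtain ⟨n, hn⟩ := (hlim.eventually
    (Ioo_mem_nhds (neg_lt_zero.2 Real.pi_pos) Real.pi_pos)).exists
  have harg := Circle.arg_exp hn.1 hn.2.le
  rw [ht n, Circle.coe_one, Complex.arg_one] at harg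
  exact (div_eq_zero_iff.1 harg.symm).resolve_right (by positivity)

lemma exists_ae_eq_const_of_forall_norm_charFunDual_smul_eq_one {ρ : Measure E}
    [IsProbabilityMeasure ρ] {L : StrongDual ℝ E} (h : ∀ r : ℝ, ‖charFunDual ρ (r • L)‖ = 1) :
    ∃ c, ∀ᵐ x ∂ρ, L x = c := by
  have hconst : ∀ r : ℝ, ∃ z : ℂ, ∀ᵐ x ∂ρ, (Circle.exp (r * L x) : ℂ) = z := by
    intro r
    refine ⟨_, (ae_eq_const_or_norm_integral_lt_of_norm_le_const (C := 1)
      (f := fun x => (Circle.exp (r * L x) : ℂ))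
      (.of_forall fun _ => (Circle.norm_coe _).le)).resolve_right ?_⟩
    simpa [charFunDual_apply] using (h r).ge
  choose z hz using hconst
  have hall := ae_all_iff.2 fun n : ℕ => hz (1 / (n + 1))
  obtain ⟨x₀, hx₀⟩ := hall.exists
  refine ⟨L x₀, hall.mono fun x hx => sub_eq_zero.1 ?_⟩
  refine eq_zero_of_forall_circleExp_div_eq_one fun n => ?_
  have hn : Circle.exp (1 / (n + 1) * L x) = Circle.exp (1 / (n + 1) * L x₀) :=
    Circle.ext ((hx n).trans (hx₀ n).symm)
  rw [sub_div, Circle.exp_sub, div_eq_one, div_eq_inv_mul, div_eq_inv_mul, ← one_div, hn]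

lemma norm_charFunDual_eq_one_of_ae_eq_const {ρ : Measure E} [IsProbabilityMeasure ρ]
    {L : StrongDual ℝ E} {c : ℝ} (h : ∀ᵐ x ∂ρ, L x = c) : ‖charFunDual ρ L‖ = 1 := by
  have hint : charFunDual ρ L = ∫ _, (Circle.exp c : ℂ) ∂ρ :=
    integral_congr_ae (h.mono fun x hx => congrArg (fun t => (Circle.exp t : ℂ)) hx)
  simp [hint]

lemma exists_dual_norm_le_two_mul_norm_comp {E F : Type*} [NormedAddCommGroup E] [NormedSpace ℝ E]
    [NormedAddCommGroup F] [NormedSpace ℝ F] (T : E →L[ℝ] F) :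
    ∃ L : StrongDual ℝ F, ‖L‖ ≤ 1 ∧ ‖T‖ ≤ 2 * ‖L ∘L T‖ := by
  rcases eq_or_ne T 0 with rfl | hT
  · exact ⟨0, by simp⟩
  obtain ⟨x, hx, hTx⟩ := T.exists_lt_apply_of_lt_opNorm (half_lt_self (norm_pos_iff.2 hT))
  obtain ⟨L, hL, hLx⟩ := exists_dual_vector'' ℝ (T x)
  have happly : ‖T x‖ ≤ ‖L ∘L T‖ * ‖x‖ := by simpa [hLx] using (L ∘L T).le_opNorm x
  exact ⟨L, hL, by nlinarith [norm_nonneg (L ∘L T)]⟩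

/-- A measure is nondegenerate if no nonzero linear form is almost everywhere constant, i.e. if
it is not carried by an affine hyperplane. -/
def IsNondegenerate (ρ : Measure E) : Prop :=
  ∀ L : StrongDual ℝ E, L ≠ 0 → ∀ c : ℝ, ¬ ∀ᵐ x ∂ρ, L x = c

namespace IsNondegenerate

lemma exists_norm_charFunDual_smul_ne_one {ρ : Measure E} [IsProbabilityMeasure ρ]
    (hρ : IsNondegenerate ρ) {L : StrongDual ℝ E} (hL : L ≠ 0) :
    ∃ r : ℝ, ‖charFunDual ρ (r • L)‖ ≠ 1 := by
  by_contra! h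
  obtain ⟨c, hc⟩ := exists_ae_eq_const_of_forall_norm_charFunDual_smul_eq_one h
  exact hρ L hL c hc

variable [FiniteDimensional ℝ E] [BorelSpace E] {ρ : ProbabilityMeasure E}
  {ρs : ℕ → ProbabilityMeasure E}

theorem tendsto_zero_of_tendsto_norm_charFunDual (hρ : IsNondegenerate (ρ : Measure E))
    (hρs : Tendsto ρs atTop (𝓝 ρ)) {L : ℕ → StrongDual ℝ E}
    (h : ∀ (a : ℕ → ℝ) (C : ℝ), (∀ k, |a k| ≤ C) →
      Tendsto (fun k => ‖charFunDual (ρs k : Measure E) (a k • L k)‖) atTop (𝓝 1)) :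
    Tendsto L atTop (𝓝 0) := by
  have : ProperSpace (StrongDual ℝ E) := FiniteDimensional.proper ℝ _
  by_contra hL
  simp only [NormedAddGroup.tendsto_nhds_zero, not_forall, not_eventually, not_lt] at hL
  obtain ⟨ε, hε, hfreq⟩ := hL
  obtain ⟨φ, hφ, hLφ⟩ := extraction_of_frequently_atTop hfreq
  have hpos : ∀ k, 0 < ‖L (φ k)‖ := fun k => hε.trans_le (hLφ k)
  obtain ⟨L₀, hL₀, ψ, hψ, hlim⟩ := (isCompact_sphere (0 : StrongDual ℝ E) 1).tendsto_subseq
    (x := fun k => ‖L (φ k)‖⁻¹ • L (φ k)) fun k => by simp [norm_smul, (hpos k).ne']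
  obtain ⟨r, hr⟩ := hρ.exists_norm_charFunDual_smul_ne_one (ne_zero_of_mem_unit_sphere ⟨L₀, hL₀⟩)
  have hφψ := (hφ.comp hψ).tendsto_atTop
  -- The truncation `max ε ‖L k‖` agrees with `‖L k‖` along `φ` and bounds the scalars off `φ`.
  have hbound : ∀ k, |r * (max ε ‖L k‖)⁻¹| ≤ |r| * ε⁻¹ := by
    intro k
    rw [abs_mul, abs_of_pos (a := (max ε ‖L k‖)⁻¹) (by positivity)]
    gcongr
    exact le_max_left _ _
  refine hr (tendsto_nhds_unique ?_ ((h _ _ hbound).comp hφψ))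
  refine (((continuous_charFunDual.tendsto (ρ, r • L₀)).comp
    ((hρs.comp hφψ).prodMk_nhds (hlim.const_smul r))).norm).congr fun k => ?_
  simp [max_eq_right (hLφ _), smul_smul]

lemma exists_of_tendsto (hρ : IsNondegenerate (ρ : Measure E))
    (hρs : Tendsto ρs atTop (𝓝 ρ)) : ∃ k, IsNondegenerate (ρs k : Measure E) := by
  by_contra! hdeg
  simp only [IsNondegenerate, not_forall, not_not, exists_prop] at hdeg
  choose L hL c hc using hdeg
  have hlim : Tendsto (fun k => ‖L k‖⁻¹ • L k) atTop (𝓝 0) :=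
    hρ.tendsto_zero_of_tendsto_norm_charFunDual hρs fun a C _ =>
      tendsto_const_nhds.congr fun k => (norm_charFunDual_eq_one_of_ae_eq_const
        (c := a k * (‖L k‖⁻¹ * c k)) ((hc k).mono fun x hx => by simp [hx])).symm
  have hnorm := hlim.norm
  simp [norm_smul, hL] at hnorm

theorem tendsto_zero_of_tendsto_norm_charFunDual_comp {F : Type*} [NormedAddCommGroup F]
    [NormedSpace ℝ F] (hρ : IsNondegenerate (ρ : Measure E))
    (hρs : Tendsto ρs atTop (𝓝 ρ)) {T : ℕ → E →L[ℝ] F}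
    (h : ∀ (L : ℕ → StrongDual ℝ F) (C : ℝ), (∀ k, ‖L k‖ ≤ C) →
      Tendsto (fun k => ‖charFunDual (ρs k : Measure E) (L k ∘L T k)‖) atTop (𝓝 1)) :
    Tendsto T atTop (𝓝 0) := by
  choose L hL hLT using fun k => exists_dual_norm_le_two_mul_norm_comp (T k)
  have hlim : Tendsto (fun k => L k ∘L T k) atTop (𝓝 0) :=
    hρ.tendsto_zero_of_tendsto_norm_charFunDual hρs fun a C ha => h (fun k => a k • L k) C
      fun k => by
        rw [norm_smul]
        exact (mul_le_of_le_one_right (abs_nonneg _) (hL k)).trans (ha k)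
  refine squeeze_zero_norm hLT ?_
  simpa using hlim.norm.const_mul 2

end IsNondegenerate

end CharacteristicFunction

theorem IsFull.isNondegenerate {d : ℕ} {μ : Measure (Fin d → ℝ)} [IsProbabilityMeasure μ]
    (hμ : IsFull μ) : IsNondegenerate μ := by
  intro L hL c hc
  obtain ⟨x₀, hx₀⟩ := hc.exists
  have hker : L.toLinearMap.ker ≠ ⊤ := fun htop =>
    hL (ContinuousLinearMap.coe_injective (LinearMap.ker_eq_top.1 htop))
  refine (hμ x₀ _ hker).ne ((measure_congr (eventuallyEq_univ.2 ?_)).trans measure_univ)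
  exact hc.mono fun x hx => by simp [hx, hx₀]

lemma IsNondegenerate.of_map {E F : Type*} [NormedAddCommGroup E] [NormedSpace ℝ E]
    [MeasurableSpace E] [BorelSpace E] [NormedAddCommGroup F] [NormedSpace ℝ F] [MeasurableSpace F]
    [BorelSpace F] {ρ : Measure E} {T : E →L[ℝ] F} {S : F →L[ℝ] E} (hST : S ∘L T = .id ℝ E) (b : F)
    (h : IsNondegenerate (ρ.map fun x => T x + b)) : IsNondegenerate ρ := by
  intro L hL c hc
  have hLS : (L ∘L S) ∘L T = L := by rw [ContinuousLinearMap.comp_assoc, hST, L.comp_id]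
  refine h (L ∘L S) (fun h0 => hL (by rw [← hLS, h0, ContinuousLinearMap.zero_comp]))
    (c + L (S b)) ?_
  rw [ae_map_iff (by fun_prop) (measurableSet_eq_fun (by fun_prop) measurable_const)]
  filter_upwards [hc] with x hx
  have hSx : S (T x) = x := DFunLike.congr_fun hST x
  simp [hSx, hx]

section Splitting

lemma tendsto_probabilityMeasure_map {Ω E : Type*} [MeasurableSpace Ω] {P : Measure Ω}
    [IsProbabilityMeasure P] [TopologicalSpace E] [MeasurableSpace E] [OpensMeasurableSpace E]
    {μ : Measure E} [IsProbabilityMeasure μ] {Z : ℕ → Ω → E}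
    (hZ : TendstoInDistribution Z atTop id (fun _ => P) μ) :
    Tendsto (β := ProbabilityMeasure E)
      (fun n => ⟨P.map (Z n), Measure.isProbabilityMeasure_map (hZ.forall_aemeasurable n)⟩) atTop
      (𝓝 ⟨μ, inferInstance⟩) := by
  simpa using hZ.tendsto

lemma isTightMeasureSet_range_map_prodMk {Ω E F ι : Type*} [MeasurableSpace Ω] {P : Measure Ω}
    [TopologicalSpace E] [MeasurableSpace E] [TopologicalSpace F] [MeasurableSpace F]
    {Y : ι → Ω → E} {Y' : ι → Ω → F} (hY : ∀ i, AEMeasurable (Y i) P)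
    (hY' : ∀ i, AEMeasurable (Y' i) P)
    (h : IsTightMeasureSet (Set.range fun i => P.map (Y i)))
    (h' : IsTightMeasureSet (Set.range fun i => P.map (Y' i))) :
    IsTightMeasureSet (Set.range fun i => P.map fun ω => (Y i ω, Y' i ω)) := by
  refine .prodMk (h.subset ?_) (h'.subset ?_)
  · rintro _ ⟨_, ⟨i, rfl⟩, rfl⟩
    exact ⟨i, (Measure.fst_map_prodMk₀ (hY' i)).symm⟩
  · rintro _ ⟨_, ⟨i, rfl⟩, rfl⟩
    exact ⟨i, (Measure.snd_map_prodMk₀ (hY i)).symm⟩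

variable {Ω E : Type*} [MeasurableSpace Ω] {P : Measure Ω} [IsProbabilityMeasure P]
  [NormedAddCommGroup E] [NormedSpace ℝ E] [FiniteDimensional ℝ E] [MeasurableSpace E]
  [BorelSpace E] {μ : Measure E} [IsProbabilityMeasure μ] {Z : ℕ → Ω → E}

lemma tendsto_charFunDual_map (hZ : TendstoInDistribution Z atTop id (fun _ => P) μ)
    {n : ℕ → ℕ} {l : Filter ℕ} (hn : Tendsto n l atTop) {L : ℕ → StrongDual ℝ E}
    {L₀ : StrongDual ℝ E} (hL : Tendsto L l (𝓝 L₀)) :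
    Tendsto (fun k => charFunDual (P.map (Z (n k))) (L k)) l (𝓝 (charFunDual μ L₀)) :=
  (continuous_charFunDual.tendsto (_, L₀)).comp
    (((tendsto_probabilityMeasure_map hZ).comp hn).prodMk_nhds hL)

lemma isTightMeasureSet_range_map (hZ : TendstoInDistribution Z atTop id (fun _ => P) μ) :
    IsTightMeasureSet (Set.range fun n => P.map (Z n)) := by
  have : ProperSpace E := FiniteDimensional.proper ℝ E
  refine (isTightMeasureSet_of_isCompact_closure (((tendsto_probabilityMeasure_map
    hZ).isCompact_insert_range.closure_of_subset (Set.subset_insert _ _)))).subset ?_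
  rintro _ ⟨n, rfl⟩
  exact ⟨_, ⟨n, rfl⟩, rfl⟩

lemma exists_tendsto_charFunDual_map_prodMk (hZ : TendstoInDistribution Z atTop id (fun _ => P) μ)
    (m n : ℕ → ℕ) (U : Ultrafilter ℕ) :
    ∃ ρ : ProbabilityMeasure (E × E), ∀ (L : ℕ → StrongDual ℝ (E × E)) (L₀ : StrongDual ℝ (E × E)),
      Tendsto L U (𝓝 L₀) → Tendsto (fun k => charFunDual
        (P.map fun ω => (Z (n k) ω, Z (m k) ω)) (L k)) U (𝓝 (charFunDual (ρ : Measure _) L₀)) := by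
  have hmeas := hZ.forall_aemeasurable
  have htight := isTightMeasureSet_range_map hZ
  have hpair := isTightMeasureSet_range_map_prodMk (fun k => hmeas (n k)) (fun k => hmeas (m k))
    (htight.subset (Set.range_comp_subset_range n fun j => P.map (Z j)))
    (htight.subset (Set.range_comp_subset_range m fun j => P.map (Z j)))
  let ρs : ℕ → ProbabilityMeasure (E × E) := fun k =>
    ⟨P.map fun ω => (Z (n k) ω, Z (m k) ω),
      Measure.isProbabilityMeasure_map ((hmeas (n k)).prodMk (hmeas (m k)))⟩
  have hcompact : IsCompact (closure (Set.range ρs)) :=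
    isCompact_closure_of_isTightMeasureSet (hpair.subset (by
      rintro _ ⟨_, ⟨k, rfl⟩, rfl⟩
      exact ⟨k, rfl⟩))
  obtain ⟨ρ, -, hρ⟩ := hcompact.ultrafilter_le_nhds (U.map ρs)
    (.trans (by simp) (monotone_principal subset_closure))
  have hρ' : Tendsto ρs U (𝓝 ρ) := hρ
  exact ⟨ρ, fun L L₀ hL =>
    (continuous_charFunDual.tendsto (ρ, L₀)).comp (hρ'.prodMk_nhds hL)⟩

/-- The Urbanik decomposability semigroup `D(μ)` of a measure on a finite-dimensional space, as a
set of operators. -/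
def decompositionSemigroup (μ : Measure E) : Set (E →L[ℝ] E) :=
  {K | ∃ ν : Measure E, IsProbabilityMeasure ν ∧ μ = μ.map K ∗ ν}

/-- The random vectors `Z n` asymptotically split along the operators `B m n` if `Z n` is
asymptotically, as `m → ∞` with `m ≤ n`, the sum of the independent vectors `B m n (Z m)` and
`Z n - B m n (Z m)`; in terms of characteristic functions, locally uniformly. -/
def AsymptoticallySplits (P : Measure Ω) (Z : ℕ → Ω → E) (B : ℕ → ℕ → E →L[ℝ] E) : Prop :=
  ∀ m n : ℕ → ℕ, Tendsto m atTop atTop → (∀ k, m k ≤ n k) →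
    ∀ (L : ℕ → StrongDual ℝ E) (C : ℝ), (∀ k, ‖L k‖ ≤ C) →
      Tendsto (fun k => charFunDual (P.map (Z (n k))) (L k) -
        charFunDual (P.map (Z (m k))) (L k ∘L B (m k) (n k)) *
          charFunDual (P.map fun ω => Z (n k) ω - B (m k) (n k) (Z (m k) ω)) (L k)) atTop (𝓝 0)

namespace AsymptoticallySplits

variable {B : ℕ → ℕ → E →L[ℝ] E}

theorem mem_decompositionSemigroup (hB : AsymptoticallySplits P Z B)
    (hZ : TendstoInDistribution Z atTop id (fun _ => P) μ) {m n : ℕ → ℕ}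
    (hm : Tendsto m atTop atTop) (hmn : ∀ k, m k ≤ n k) {K : E →L[ℝ] E}
    (hK : Tendsto (fun k => B (m k) (n k)) atTop (𝓝 K)) : K ∈ decompositionSemigroup μ := by
  let U : Ultrafilter ℕ := Ultrafilter.of atTop
  have hU : (U : Filter ℕ) ≤ atTop := Ultrafilter.of_le atTop
  obtain ⟨ρ, hρ⟩ := exists_tendsto_charFunDual_map_prodMk hZ m n U
  let D : (E →L[ℝ] E) → E × E →L[ℝ] E := fun T => .fst ℝ E E - T ∘L .snd ℝ E E
  have hprob : IsProbabilityMeasure ((ρ : Measure (E × E)).map (D K)) :=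
    Measure.isProbabilityMeasure_map (by fun_prop)
  have : IsProbabilityMeasure (μ.map K) := Measure.isProbabilityMeasure_map (by fun_prop)
  refine ⟨(ρ : Measure (E × E)).map (D K), hprob, Measure.ext_of_charFunDual (funext fun L => ?_)⟩
  rw [charFunDual_conv, charFunDual_map, charFunDual_map]
  have hmU := hm.mono_left hU
  have hnU := (tendsto_atTop_mono hmn hm).mono_left hU
  have hKU := hK.mono_left hU
  have hremainder : Tendsto (fun k => charFunDual
      (P.map fun ω => Z (n k) ω - B (m k) (n k) (Z (m k) ω)) L) U
      (𝓝 (charFunDual (ρ : Measure (E × E)) (L ∘L D K))) := by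
    have hcont : Continuous fun T : E →L[ℝ] E => L ∘L D T := by fun_prop
    refine (hρ _ _ ((hcont.tendsto K).comp hKU)).congr fun k => ?_
    rw [Function.comp_apply, ← charFunDual_map, AEMeasurable.map_map_of_aemeasurable (by fun_prop)
      ((hZ.forall_aemeasurable _).prodMk (hZ.forall_aemeasurable _))]
    rfl
  have hlim := (tendsto_charFunDual_map hZ hnU (tendsto_const_nhds (x := L))).sub
    ((tendsto_charFunDual_map hZ hmU (((L.postcomp E).continuous.tendsto K).comp hKU)).mul
      hremainder)
  exact sub_eq_zero.1 (tendsto_nhds_unique hlim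
    ((hB m n hm hmn (fun _ => L) ‖L‖ fun _ => le_rfl).mono_left hU))

lemma tendsto_norm_charFunDual_comp (hB : AsymptoticallySplits P Z B)
    (hZ : TendstoInDistribution Z atTop id (fun _ => P) μ) {m n : ℕ → ℕ}
    (hm : Tendsto m atTop atTop) (hmn : ∀ k, m k ≤ n k) {L : ℕ → StrongDual ℝ E}
    (hL : Tendsto L atTop (𝓝 0)) :
    Tendsto (fun k => ‖charFunDual (P.map (Z (m k))) (L k ∘L B (m k) (n k))‖) atTop (𝓝 1) := by
  obtain ⟨C, hC⟩ := hL.norm.bddAbove_range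
  have hprod := (tendsto_charFunDual_map hZ (tendsto_atTop_mono hmn hm) hL).sub
    (hB m n hm hmn L C fun k => hC ⟨k, rfl⟩)
  simp only [sub_sub_cancel, charFunDual_zero, sub_zero] at hprod
  have hprob : ∀ j, IsProbabilityMeasure (P.map (Z j)) := fun j =>
    Measure.isProbabilityMeasure_map (hZ.forall_aemeasurable j)
  have hprob' : ∀ k, IsProbabilityMeasure
      (P.map fun ω => Z (n k) ω - B (m k) (n k) (Z (m k) ω)) := fun k =>
    Measure.isProbabilityMeasure_map ((hZ.forall_aemeasurable _).sub
      ((B _ _).measurable.comp_aemeasurable (hZ.forall_aemeasurable _)))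
  refine tendsto_of_tendsto_of_tendsto_of_le_of_le (by simpa using hprod.norm)
    tendsto_const_nhds (fun k => ?_) (fun k => norm_charFunDual_le_one _ _)
  exact mul_le_of_le_one_right (norm_nonneg _) (norm_charFunDual_le_one _ _)

theorem exists_norm_le (hB : AsymptoticallySplits P Z B)
    (hZ : TendstoInDistribution Z atTop id (fun _ => P) μ) (hμ : IsNondegenerate μ) :
    ∃ N : ℕ, ∀ m n, N ≤ m → m ≤ n → ‖B m n‖ ≤ N + 1 := by
  by_contra! hcon
  choose m n hkm hmn hlt using hcon
  have hm : Tendsto m atTop atTop := tendsto_atTop_mono hkm tendsto_id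
  have hpos : ∀ k, 0 < ‖B (m k) (n k)‖ := fun k => (by positivity : (0 : ℝ) < k + 1).trans (hlt k)
  have hinv : Tendsto (fun k => ‖B (m k) (n k)‖⁻¹) atTop (𝓝 0) := by
    refine squeeze_zero (fun k => (inv_pos.2 (hpos k)).le) (fun k => ?_)
      tendsto_one_div_add_atTop_nhds_zero_nat
    simpa using inv_anti₀ (by positivity) (hlt k).le
  suffices h : Tendsto (fun k => ‖B (m k) (n k)‖⁻¹ • B (m k) (n k)) atTop (𝓝 0) by
    have hnorm := h.norm
    simp [norm_smul, (hpos _).ne'] at hnorm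
  refine IsNondegenerate.tendsto_zero_of_tendsto_norm_charFunDual_comp (ρ := ⟨μ, inferInstance⟩) hμ
    ((tendsto_probabilityMeasure_map hZ).comp hm) fun L C hL => ?_
  have hL₀ : Tendsto (fun k => ‖B (m k) (n k)‖⁻¹ • L k) atTop (𝓝 0) :=
    hinv.zero_smul_isBoundedUnder_le (isBoundedUnder_of ⟨C, hL⟩)
  refine (hB.tendsto_norm_charFunDual_comp hZ hm hmn hL₀).congr fun k => ?_
  rw [ContinuousLinearMap.smul_comp, ContinuousLinearMap.comp_smul]
  rfl

end AsymptoticallySplits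

end Splitting

section Mixing

variable {Ω G : Type*} {m m₁ m₂ mΩ : MeasurableSpace Ω} {P : Measure Ω} [IsProbabilityMeasure P]
  [NormedAddCommGroup G] [NormedSpace ℝ G] [CompleteSpace G]

lemma norm_integral_smul_le_of_forall_abs_setIntegral_le (hm : m ≤ mΩ) {h : Ω → ℝ} {F : Ω → G}
    (hh : Integrable h P) (hF : StronglyMeasurable[m] F) (hF_le : ∀ ω, ‖F ω‖ ≤ 1) {a : ℝ}
    (ha : ∀ A, MeasurableSet[m] A → |∫ ω in A, h ω ∂P| ≤ a) :
    ‖∫ ω, h ω • F ω ∂P‖ ≤ 2 * a := by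
  have hint : Integrable (fun ω => h ω • F ω) P :=
    hh.smul_bdd 1 (hF.mono hm).aestronglyMeasurable (.of_forall hF_le)
  have hset : ∀ A, MeasurableSet[m] A → |∫ ω in A, P[h|m] ω ∂P| ≤ a := fun A hA => by
    rw [setIntegral_condExp hm hh hA]
    exact ha A hA
  have hmeas : StronglyMeasurable[m] (P[h|m]) := stronglyMeasurable_condExp
  -- The sets where `P[h|m]` is nonnegative or nonpositive are `m`-measurable, so `hset` applies.
  have hpos := (abs_le.1 (hset _ (hmeas.measurable (measurableSet_Ici (a := 0))))).2
  have hneg := (abs_le.1 (hset _ (hmeas.measurable (measurableSet_Iic (a := 0))))).1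
  calc ‖∫ ω, h ω • F ω ∂P‖ = ‖∫ ω, P[h|m] ω • F ω ∂P‖ := by
        rw [← integral_condExp hm]
        exact congrArg _ (integral_congr_ae
          (condExp_smul_of_aestronglyMeasurable_right hh hint hF.aestronglyMeasurable))
    _ ≤ ∫ ω, ‖P[h|m] ω‖ ∂P :=
        norm_integral_le_of_norm_le integrable_condExp.norm (.of_forall fun ω => by
          rw [norm_smul]
          exact mul_le_of_le_one_right (norm_nonneg _) (hF_le ω))
    _ = ∫ ω in P[h|m] ⁻¹' Set.Ici 0, P[h|m] ω ∂P - ∫ ω in P[h|m] ⁻¹' Set.Iic 0, P[h|m] ω ∂P :=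
        integral_norm_eq_pos_sub_neg integrable_condExp
    _ ≤ 2 * a := by linarith

lemma abs_measureReal_inter_sub_mul_le_one (A B : Set Ω) :
    |P.real (A ∩ B) - P.real A * P.real B| ≤ 1 :=
  abs_sub_le_of_nonneg_of_le measureReal_nonneg measureReal_le_one
    (mul_nonneg measureReal_nonneg measureReal_nonneg)
    (mul_le_one₀ measureReal_le_one measureReal_nonneg measureReal_le_one)

lemma abs_measureReal_inter_sub_mul_le_alphaSig {A B : Set Ω} (hA : MeasurableSet[m₁] A)
    (hB : MeasurableSet[m₂] B) :
    |P.real (A ∩ B) - P.real A * P.real B| ≤ alphaSig P m₁ m₂ := by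
  refine le_csSup ⟨1, ?_⟩ ⟨A, B, hA, hB, rfl⟩
  rintro _ ⟨A, B, -, -, rfl⟩
  exact abs_measureReal_inter_sub_mul_le_one A B

lemma alphaSig_le_one : alphaSig P m₁ m₂ ≤ 1 := by
  refine csSup_le ⟨_, ∅, ∅, @MeasurableSet.empty _ m₁, @MeasurableSet.empty _ m₂, rfl⟩ ?_
  rintro _ ⟨A, B, -, -, rfl⟩
  exact abs_measureReal_inter_sub_mul_le_one A B

/-- The σ-field `σ(X_k : k ∈ S)` generated by the members of a family of maps indexed by `S`. -/
abbrev generatedSigma {Ω M ι : Type*} [MeasurableSpace M] (X : ι → Ω → M) (S : Set ι) :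
    MeasurableSpace Ω :=
  ⨆ k ∈ S, MeasurableSpace.comap (X k) inferInstance

lemma generatedSigma_le {Ω M ι : Type*} [mΩ : MeasurableSpace Ω] [MeasurableSpace M]
    {X : ι → Ω → M} (hX : ∀ k, Measurable (X k)) (S : Set ι) : generatedSigma X S ≤ mΩ :=
  iSup₂_le fun k _ => (hX k).comap_le

lemma measurable_generatedSigma_sum {Ω M ι : Type*} [AddCommMonoid M] [MeasurableSpace M]
    [MeasurableAdd₂ M] (X : ι → Ω → M) {s : Finset ι} {S : Set ι} (hs : ∀ k ∈ s, k ∈ S) :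
    Measurable[generatedSigma X S] fun ω => ∑ k ∈ s, X k ω :=
  @Finset.measurable_fun_sum _ _ _ _ _ _ (generatedSigma X S) X s fun k hk =>
    (comap_measurable (X k)).mono
      (le_iSup₂ (f := fun k (_ : k ∈ S) => MeasurableSpace.comap (X k) inferInstance) k (hs k hk))
      le_rfl

lemma alphaSig_le_alphaMix {d : ℕ} (X : ℕ → Ω → (Fin d → ℝ)) (n : ℕ) {j : ℕ} (hj : 1 ≤ j) :
    alphaSig P (generatedSigma X (Set.Icc 1 j)) (generatedSigma X (Set.Ici (j + n))) ≤
      alphaMix P X n :=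
  le_ciSup (f := fun j : {j : ℕ // 1 ≤ j} =>
    alphaSig P (generatedSigma X (Set.Icc 1 j)) (generatedSigma X (Set.Ici (j + n))))
    ⟨1, Set.forall_mem_range.2 fun _ => alphaSig_le_one⟩ ⟨j, hj⟩

lemma abs_setIntegral_sub_mul_integral_le_alphaSig (hm₁ : m₁ ≤ mΩ) (hm₂ : m₂ ≤ mΩ) {A : Set Ω}
    (hA : MeasurableSet[m₁] A) {H : Ω → ℝ} (hH : StronglyMeasurable[m₂] H)
    (hH_le : ∀ ω, ‖H ω‖ ≤ 1) :
    |∫ ω in A, H ω ∂P - P.real A * ∫ ω, H ω ∂P| ≤ 2 * alphaSig P m₁ m₂ := by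
  have hHint : Integrable H P := .of_bound (hH.mono hm₂).aestronglyMeasurable 1 (.of_forall hH_le)
  have hA' := hm₁ A hA
  have h1 : Integrable (A.indicator (1 : Ω → ℝ)) P := (integrable_const 1).indicator hA'
  have key := norm_integral_smul_le_of_forall_abs_setIntegral_le hm₂
    (h1.sub (integrable_const (P.real A))) hH hH_le (a := alphaSig P m₁ m₂) fun B hB => by
      simp only [Pi.sub_apply]
      rw [integral_sub h1.integrableOn (by simp), setIntegral_indicator hA']
      simpa [mul_comm, Set.inter_comm] using abs_measureReal_inter_sub_mul_le_alphaSig hA hB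
  have hsmul : ∀ ω, (A.indicator 1 - fun _ => P.real A : Ω → ℝ) ω • H ω =
      A.indicator H ω - P.real A * H ω := fun ω => by
    by_cases hω : ω ∈ A <;> simp [hω, sub_mul]
  simp_rw [hsmul] at key
  rwa [integral_sub (hHint.indicator hA') (hHint.const_mul _), integral_indicator hA',
    integral_const_mul] at key

theorem norm_integral_smul_sub_le_alphaSig (hm₁ : m₁ ≤ mΩ) (hm₂ : m₂ ≤ mΩ) {F : Ω → G} {H : Ω → ℝ}
    (hF : StronglyMeasurable[m₁] F) (hF_le : ∀ ω, ‖F ω‖ ≤ 1) (hH : StronglyMeasurable[m₂] H)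
    (hH_le : ∀ ω, ‖H ω‖ ≤ 1) :
    ‖∫ ω, H ω • F ω ∂P - (∫ ω, H ω ∂P) • ∫ ω, F ω ∂P‖ ≤ 4 * alphaSig P m₁ m₂ := by
  have hFint : Integrable F P := .of_bound (hF.mono hm₁).aestronglyMeasurable 1 (.of_forall hF_le)
  have hHint : Integrable H P := .of_bound (hH.mono hm₂).aestronglyMeasurable 1 (.of_forall hH_le)
  have key := norm_integral_smul_le_of_forall_abs_setIntegral_le hm₁
    (hHint.sub (integrable_const (∫ ω, H ω ∂P))) hF hF_le (a := 2 * alphaSig P m₁ m₂) fun A hA => by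
      simp only [Pi.sub_apply]
      rw [integral_sub hHint.integrableOn (by simp)]
      simpa using abs_setIntegral_sub_mul_integral_le_alphaSig hm₁ hm₂ hA hH hH_le
  simp only [Pi.sub_apply, sub_smul] at key
  have hint : Integrable (fun ω => H ω • F ω) P :=
    hHint.smul_bdd 1 (hF.mono hm₁).aestronglyMeasurable (.of_forall hF_le)
  have hint' : Integrable (fun ω => (∫ ω, H ω ∂P) • F ω) P := hFint.smul _
  rw [integral_sub hint hint', integral_smul] at key
  linarith

theorem norm_integral_mul_sub_le_alphaSig {𝕜 : Type*} [RCLike 𝕜] (hm₁ : m₁ ≤ mΩ) (hm₂ : m₂ ≤ mΩ)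
    {F H : Ω → 𝕜} (hF : StronglyMeasurable[m₁] F) (hF_le : ∀ ω, ‖F ω‖ ≤ 1)
    (hH : StronglyMeasurable[m₂] H) (hH_le : ∀ ω, ‖H ω‖ ≤ 1) :
    ‖∫ ω, F ω * H ω ∂P - (∫ ω, F ω ∂P) * ∫ ω, H ω ∂P‖ ≤ 8 * alphaSig P m₁ m₂ := by
  have hre := norm_integral_smul_sub_le_alphaSig (P := P) hm₁ hm₂ hF hF_le
    (RCLike.continuous_re.comp_stronglyMeasurable hH)
    fun ω => (RCLike.norm_re_le_norm _).trans (hH_le ω)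
  have him := norm_integral_smul_sub_le_alphaSig (P := P) hm₁ hm₂ hF hF_le
    (RCLike.continuous_im.comp_stronglyMeasurable hH)
    fun ω => (RCLike.norm_im_le_norm _).trans (hH_le ω)
  have hFint : Integrable F P := .of_bound (hF.mono hm₁).aestronglyMeasurable 1 (.of_forall hF_le)
  have hHint : Integrable H P := .of_bound (hH.mono hm₂).aestronglyMeasurable 1 (.of_forall hH_le)
  have hreF : Integrable (fun ω => RCLike.re (H ω) • F ω) P :=
    hHint.re.smul_bdd 1 hFint.aestronglyMeasurable (.of_forall hF_le)
  have himF : Integrable (fun ω => RCLike.im (H ω) • F ω) P :=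
    hHint.im.smul_bdd 1 hFint.aestronglyMeasurable (.of_forall hF_le)
  have hmul : ∫ ω, F ω * H ω ∂P =
      ∫ ω, RCLike.re (H ω) • F ω ∂P + (∫ ω, RCLike.im (H ω) • F ω ∂P) * RCLike.I := by
    rw [← integral_mul_const, ← integral_add hreF (himF.mul_const _)]
    congr with ω
    nth_rw 1 [← RCLike.re_add_im (H ω)]
    simp only [RCLike.real_smul_eq_coe_mul]
    ring
  have hdiff : ∫ ω, F ω * H ω ∂P - (∫ ω, F ω ∂P) * ∫ ω, H ω ∂P =
      (∫ ω, RCLike.re (H ω) • F ω ∂P - (∫ ω, RCLike.re (H ω) ∂P) • ∫ ω, F ω ∂P) +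
        (∫ ω, RCLike.im (H ω) • F ω ∂P - (∫ ω, RCLike.im (H ω) ∂P) • ∫ ω, F ω ∂P) * RCLike.I := by
    rw [hmul, ← integral_re_add_im hHint]
    simp only [RCLike.real_smul_eq_coe_mul]
    ring
  have hI : ‖(RCLike.I : 𝕜)‖ ≤ 1 := by
    rw [RCLike.norm_I]
    split_ifs <;> norm_num
  rw [hdiff]
  refine (norm_add_le _ _).trans ?_
  rw [norm_mul]
  linarith [mul_le_of_le_one_right (norm_nonneg (∫ ω, RCLike.im (H ω) • F ω ∂P -
    (∫ ω, RCLike.im (H ω) ∂P) • ∫ ω, F ω ∂P)) hI, hre, him]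

theorem norm_integral_mul_sub_le_alphaSig_add {𝕜 : Type*} [RCLike 𝕜] (hm₁ : m₁ ≤ mΩ) (hm₂ : m₂ ≤ mΩ)
    {F G H : Ω → 𝕜} (hF : StronglyMeasurable[m₁] F) (hF_le : ∀ ω, ‖F ω‖ ≤ 1)
    (hG : StronglyMeasurable[m₂] G) (hG_le : ∀ ω, ‖G ω‖ ≤ 1) (hH : Integrable H P) :
    ‖∫ ω, F ω * H ω ∂P - (∫ ω, F ω ∂P) * ∫ ω, H ω ∂P‖ ≤
      8 * alphaSig P m₁ m₂ + 2 * ∫ ω, ‖H ω - G ω‖ ∂P := by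
  have hFm := (hF.mono hm₁).aestronglyMeasurable (μ := P)
  have hGint : Integrable G P := .of_bound (hG.mono hm₂).aestronglyMeasurable 1 (.of_forall hG_le)
  have hDint : Integrable (fun ω => H ω - G ω) P := hH.sub hGint
  have hsplit : ∫ ω, F ω * H ω ∂P - (∫ ω, F ω ∂P) * ∫ ω, H ω ∂P =
      (∫ ω, F ω * G ω ∂P - (∫ ω, F ω ∂P) * ∫ ω, G ω ∂P) +
        (∫ ω, F ω * (H ω - G ω) ∂P - (∫ ω, F ω ∂P) * ∫ ω, (H ω - G ω) ∂P) := by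
    simp_rw [mul_sub]
    rw [integral_sub hH hGint, integral_sub (hH.bdd_mul hFm (.of_forall hF_le))
      (hGint.bdd_mul hFm (.of_forall hF_le))]
    ring
  have hprod : ‖∫ ω, F ω * (H ω - G ω) ∂P‖ ≤ ∫ ω, ‖H ω - G ω‖ ∂P :=
    norm_integral_le_of_norm_le hDint.norm (.of_forall fun ω => by
      rw [norm_mul]
      exact mul_le_of_le_one_left (norm_nonneg _) (hF_le ω))
  have hF_int : ‖∫ ω, F ω ∂P‖ ≤ 1 := by
    simpa using norm_integral_le_of_norm_le_const (μ := P) (.of_forall hF_le)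
  have hmul : ‖(∫ ω, F ω ∂P) * ∫ ω, (H ω - G ω) ∂P‖ ≤ ∫ ω, ‖H ω - G ω‖ ∂P := by
    rw [norm_mul]
    exact (mul_le_of_le_one_left (norm_nonneg _) hF_int).trans (norm_integral_le_integral_norm _)
  rw [hsplit]
  refine (norm_add_le _ _).trans (add_le_add
    (norm_integral_mul_sub_le_alphaSig hm₁ hm₂ hF hF_le hG hG_le) ((norm_sub_le _ _).trans ?_))
  linarith

end Mixing

section Blocks

lemma norm_circleExp_sub_one_le (x : ℝ) : ‖(Circle.exp x : ℂ) - 1‖ ≤ |x| := by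
  rw [Circle.coe_exp, mul_comm]
  exact Real.norm_exp_I_mul_ofReal_sub_one_le

lemma norm_circleExp_sub (x y : ℝ) :
    ‖(Circle.exp x : ℂ) - Circle.exp y‖ = ‖(Circle.exp (x - y) : ℂ) - 1‖ := by
  have hxy : (Circle.exp x : ℂ) = Circle.exp (x - y) * Circle.exp y := by
    rw [← Circle.coe_mul, ← Circle.exp_add, sub_add_cancel]
  rw [hxy, ← sub_one_mul, norm_mul, Circle.norm_coe, mul_one]

lemma norm_circleExp_sum_sub_one_le {ι : Type*} (s : Finset ι) (x : ι → ℝ) :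
    ‖(Circle.exp (∑ i ∈ s, x i) : ℂ) - 1‖ ≤ ∑ i ∈ s, ‖(Circle.exp (x i) : ℂ) - 1‖ := by
  classical
  induction s using Finset.induction_on with
  | empty => simp
  | insert i s hi ih =>
    rw [Finset.sum_insert hi, Finset.sum_insert hi]
    calc _ ≤ ‖(Circle.exp (x i + ∑ j ∈ s, x j) : ℂ) - Circle.exp (∑ j ∈ s, x j)‖ +
          ‖(Circle.exp (∑ j ∈ s, x j) : ℂ) - 1‖ := norm_sub_le_norm_sub_add_norm_sub _ _ _
      _ ≤ _ := by
        rw [norm_circleExp_sub, add_sub_cancel_right]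
        gcongr

variable {Ω E : Type*} [MeasurableSpace Ω] {P : Measure Ω} [IsProbabilityMeasure P]
  [NormedAddCommGroup E] [NormedSpace ℝ E] [MeasurableSpace E] [OpensMeasurableSpace E]

lemma integrable_circleExp {f : Ω → ℝ} (hf : Measurable f) :
    Integrable (fun ω => (Circle.exp (f ω) : ℂ)) P :=
  .of_bound (by fun_prop) 1 (.of_forall fun ω => (Circle.norm_coe _).le)

lemma integral_norm_circleExp_sub_one_le {Y : Ω → E} (hY : Measurable Y) (L : StrongDual ℝ E)
    {δ : ℝ} (hδ : 0 ≤ δ) :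
    ∫ ω, ‖(Circle.exp (L (Y ω)) : ℂ) - 1‖ ∂P ≤ ‖L‖ * δ + 2 * P.real {ω | δ ≤ ‖Y ω‖} := by
  set S : Set Ω := {ω | δ ≤ ‖Y ω‖}
  have hS : MeasurableSet S := measurableSet_le measurable_const hY.norm
  have hint : Integrable (S.indicator fun _ => (2 : ℝ)) P := (integrable_const 2).indicator hS
  have hle : ∀ ω, ‖(Circle.exp (L (Y ω)) : ℂ) - 1‖ ≤ ‖L‖ * δ + S.indicator (fun _ => 2) ω :=
      fun ω => by
    by_cases hω : ω ∈ S
    · rw [Set.indicator_of_mem hω]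
      have htwo := norm_sub_le (Circle.exp (L (Y ω)) : ℂ) 1
      rw [Circle.norm_coe, norm_one] at htwo
      linarith [mul_nonneg (norm_nonneg L) hδ]
    · rw [Set.indicator_of_notMem hω, add_zero]
      exact (norm_circleExp_sub_one_le _).trans (L.le_opNorm_of_le (not_le.1 hω).le)
  calc _ ≤ ∫ ω, (‖L‖ * δ + S.indicator (fun _ => 2) ω) ∂P :=
        integral_mono ((integrable_circleExp (by fun_prop)).sub (integrable_const 1)).norm
          ((integrable_const _).add hint) hle
    _ = _ := by
        rw [integral_add (integrable_const _) hint, integral_indicator_const _ hS]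
        simp [mul_comm]

lemma integral_norm_circleExp_sum_sub_one_le {ι : Type*} (s : Finset ι) {Y : ι → Ω → E}
    (hY : ∀ i, Measurable (Y i)) (L : StrongDual ℝ E) :
    ∫ ω, ‖(Circle.exp (L (∑ i ∈ s, Y i ω)) : ℂ) - 1‖ ∂P ≤
      ∑ i ∈ s, ∫ ω, ‖(Circle.exp (L (Y i ω)) : ℂ) - 1‖ ∂P := by
  have hint : ∀ f : Ω → ℝ, Measurable f →
      Integrable (fun ω => ‖(Circle.exp (f ω) : ℂ) - 1‖) P := fun f hf =>
    ((integrable_circleExp hf).sub (integrable_const 1)).norm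
  have hLY : ∀ i, Measurable fun ω => L (Y i ω) := fun i => by fun_prop
  simp_rw [map_sum]
  rw [← integral_finsetSum _ fun i _ => hint _ (hLY i)]
  exact integral_mono (hint _ (Finset.measurable_fun_sum _ fun i _ => hLY i))
    (integrable_finsetSum _ fun i _ => hint _ (hLY i)) fun ω => norm_circleExp_sum_sub_one_le _ _

theorem Infinitesimal.exists_integral_norm_circleExp_le {d : ℕ}
    {A : ℕ → Matrix (Fin d) (Fin d) ℝ} {X : ℕ → Ω → (Fin d → ℝ)} (hinf : Infinitesimal P A X)
    (hX : ∀ j, Measurable (X j)) (g : ℕ) (C : ℝ) {ε : ℝ} (hε : 0 < ε) :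
    ∃ N, ∀ n ≥ N, ∀ s ⊆ Finset.Icc 1 n, s.card ≤ g → ∀ L : StrongDual ℝ (Fin d → ℝ), ‖L‖ ≤ C →
      ∫ ω, ‖(Circle.exp (L (A n *ᵥ ∑ j ∈ s, X j ω)) : ℂ) - 1‖ ∂P ≤ ε := by
  set η : ℝ := ε / (3 * (g + 1)) with hη
  have hη_pos : 0 < η := by positivity
  obtain ⟨N, hN⟩ := hinf (η / (|C| + 1)) (by positivity) η hη_pos
  refine ⟨N, fun n hn s hsn hs L hL => ?_⟩
  have hAX : ∀ j, Measurable fun ω => A n *ᵥ X j ω := fun j => by fun_prop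
  have hterm : ∀ j ∈ s, ∫ ω, ‖(Circle.exp (L (A n *ᵥ X j ω)) : ℂ) - 1‖ ∂P ≤ 3 * η :=
      fun j hj => by
    have hj' := Finset.mem_Icc.1 (hsn hj)
    have hprob : P.real {ω | η / (|C| + 1) ≤ ‖A n *ᵥ X j ω‖} < η := hN n hn j hj'.1 hj'.2
    have hLη : ‖L‖ * (η / (|C| + 1)) ≤ η := by
      rw [mul_div_left_comm]
      exact mul_le_of_le_one_right hη_pos.le
        (div_le_one_of_le₀ (by linarith [le_abs_self C]) (by positivity))
    linarith [integral_norm_circleExp_sub_one_le (P := P) (hAX j) L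
      (by positivity : 0 ≤ η / (|C| + 1))]
  simp_rw [mulVec_sum]
  calc _ ≤ ∑ j ∈ s, ∫ ω, ‖(Circle.exp (L (A n *ᵥ X j ω)) : ℂ) - 1‖ ∂P :=
        integral_norm_circleExp_sum_sub_one_le s hAX L
    _ ≤ s.card • (3 * η) := Finset.sum_le_card_nsmul _ _ _ hterm
    _ ≤ (g + 1) * (3 * η) := by
        rw [nsmul_eq_mul]
        gcongr
        exact_mod_cast hs.trans (Nat.le_succ g)
    _ = ε := by rw [hη]; field_simp

end Blocks

section NormalizedSums

lemma sum_Icc_eq_sum_add_gap_add {M : Type*} [AddCommMonoid M] (f : ℕ → M) {m n : ℕ} (hmn : m ≤ n)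
    (g : ℕ) : ∑ j ∈ Finset.Icc 1 n, f j = ∑ j ∈ Finset.Icc 1 m, f j +
      (∑ j ∈ Finset.Ioc m (min n (m + g)), f j + ∑ j ∈ Finset.Ioc (m + g) n, f j) := by
  have hIoc : ∀ k, Finset.Icc 1 k = Finset.Ioc 0 k := fun _ => rfl
  have hgap : ∑ j ∈ Finset.Ioc m n, f j =
      ∑ j ∈ Finset.Ioc m (min n (m + g)), f j + ∑ j ∈ Finset.Ioc (m + g) n, f j := by
    rcases le_total n (m + g) with h | h
    · rw [min_eq_left h, Finset.Ioc_eq_empty_of_le h, Finset.sum_empty, add_zero]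
    · rw [min_eq_right h, Finset.sum_Ioc_consecutive _ (Nat.le_add_right m g) h]
  rw [← hgap, hIoc, hIoc, Finset.sum_Ioc_consecutive _ (Nat.zero_le _) hmn]

variable {Ω : Type*} {d : ℕ}

/-- The normalized partial sums `A_n S_n + b_n`. -/
def normalizedSum (A : ℕ → Matrix (Fin d) (Fin d) ℝ) (b : ℕ → Fin d → ℝ)
    (X : ℕ → Ω → (Fin d → ℝ)) (n : ℕ) (ω : Ω) : Fin d → ℝ :=
  A n *ᵥ partialSum X n ω + b n

variable {A : ℕ → Matrix (Fin d) (Fin d) ℝ} {b : ℕ → Fin d → ℝ} {X : ℕ → Ω → (Fin d → ℝ)}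

lemma normalizedSum_sub_apply {m n : ℕ} (hmn : m ≤ n) {B : (Fin d → ℝ) →L[ℝ] (Fin d → ℝ)}
    (hB : ∀ x, B (A m *ᵥ x) = A n *ᵥ x) (g : ℕ) (ω : Ω) :
    normalizedSum A b X n ω - B (normalizedSum A b X m ω) =
      A n *ᵥ ∑ j ∈ Finset.Ioc m (min n (m + g)), X j ω +
        (A n *ᵥ ∑ j ∈ Finset.Ioc (m + g) n, X j ω + (b n - B (b m))) := by
  simp only [normalizedSum, partialSum, sum_Icc_eq_sum_add_gap_add _ hmn g, mulVec_add, map_add, hB]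
  abel

variable [MeasurableSpace Ω] {P : Measure Ω} [IsProbabilityMeasure P]

lemma measurable_partialSum (hX : ∀ j, Measurable (X j)) (n : ℕ) : Measurable (partialSum X n) :=
  Finset.measurable_fun_sum _ fun j _ => hX j

lemma measurable_normalizedSum (hX : ∀ j, Measurable (X j)) (n : ℕ) :
    Measurable (normalizedSum A b X n) := by
  have hS := measurable_partialSum hX n
  unfold normalizedSum
  fun_prop

theorem norm_charFunDual_normalizedSum_sub_mul_le (hX : ∀ j, Measurable (X j)) {m n : ℕ}
    (hm : 1 ≤ m) (hmn : m ≤ n) {B : (Fin d → ℝ) →L[ℝ] (Fin d → ℝ)}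
    (hB : ∀ x, B (A m *ᵥ x) = A n *ᵥ x) (g : ℕ) (L : StrongDual ℝ (Fin d → ℝ)) :
    ‖charFunDual (P.map (normalizedSum A b X n)) L -
        charFunDual (P.map (normalizedSum A b X m)) (L ∘L B) *
          charFunDual (P.map fun ω => normalizedSum A b X n ω - B (normalizedSum A b X m ω)) L‖ ≤
      8 * alphaMix P X g + 2 * ∫ ω, ‖(Circle.exp
        (L (A n *ᵥ ∑ j ∈ Finset.Ioc m (min n (m + g)), X j ω)) : ℂ) - 1‖ ∂P := by
  have hZ := measurable_normalizedSum (A := A) (b := b) hX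
  have hF : Measurable[generatedSigma X (Set.Icc 1 m)] fun ω =>
      (Circle.exp (L (B (normalizedSum A b X m ω))) : ℂ) := by
    have hcont : Continuous fun x => (Circle.exp (L (B (A m *ᵥ x + b m))) : ℂ) := by fun_prop
    exact hcont.measurable.comp (measurable_generatedSigma_sum X fun k hk => Finset.mem_Icc.1 hk)
  have hG : Measurable[generatedSigma X (Set.Ici (m + g))] fun ω =>
      (Circle.exp (L (A n *ᵥ ∑ j ∈ Finset.Ioc (m + g) n, X j ω + (b n - B (b m)))) : ℂ) := by
    have hcont : Continuous fun x => (Circle.exp (L (A n *ᵥ x + (b n - B (b m)))) : ℂ) := by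
      fun_prop
    exact hcont.measurable.comp
      (measurable_generatedSigma_sum X fun k hk => (Finset.mem_Ioc.1 hk).1.le)
  have hrem : Measurable fun ω => normalizedSum A b X n ω - B (normalizedSum A b X m ω) := by
    fun_prop
  have hH : Integrable (fun ω =>
      (Circle.exp (L (normalizedSum A b X n ω - B (normalizedSum A b X m ω))) : ℂ)) P :=
    integrable_circleExp (L.measurable.comp hrem)
  have key := norm_integral_mul_sub_le_alphaSig_add (P := P) (generatedSigma_le hX _)
    (generatedSigma_le hX _) hF.stronglyMeasurable (fun ω => (Circle.norm_coe _).le)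
    hG.stronglyMeasurable (fun ω => (Circle.norm_coe _).le) hH
  simp_rw [← Circle.coe_mul, ← Circle.exp_add, ← map_add, add_sub_cancel, norm_circleExp_sub,
    ← map_sub, normalizedSum_sub_apply hmn hB g, add_sub_cancel_right] at key
  rw [charFunDual_map_eq_integral (hZ n).aemeasurable,
    charFunDual_map_eq_integral (hZ m).aemeasurable,
    charFunDual_map_eq_integral hrem.aemeasurable]
  simp_rw [normalizedSum_sub_apply hmn hB g]
  refine key.trans ?_
  gcongr
  exact alphaSig_le_alphaMix X g hm

end NormalizedSums

section Limits

lemma WeakLim.tendstoInDistribution {Ω : Type*} [MeasurableSpace Ω] {P : Measure Ω}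
    [IsProbabilityMeasure P] {d : ℕ} {Z : ℕ → Ω → (Fin d → ℝ)} {μ : Measure (Fin d → ℝ)}
    [IsProbabilityMeasure μ] (h : WeakLim (fun n => P.map (Z n)) μ) (hZ : ∀ n, Measurable (Z n)) :
    TendstoInDistribution Z atTop id (fun _ => P) μ where
  forall_aemeasurable n := (hZ n).aemeasurable
  tendsto := by
    refine ProbabilityMeasure.tendsto_iff_forall_integral_tendsto.2 fun f => ?_
    simpa using h f

/-- The operator `x ↦ M x` of a matrix `M`, as an isomorphism of algebras. -/
noncomputable def matrixOperator (d : ℕ) :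
    Matrix (Fin d) (Fin d) ℝ ≃ₐ[ℝ] ((Fin d → ℝ) →L[ℝ] (Fin d → ℝ)) :=
  Matrix.toLinAlgEquiv'.trans (Module.End.toContinuousLinearMap _)

lemma matrixOperator_apply {d : ℕ} (M : Matrix (Fin d) (Fin d) ℝ) (x : Fin d → ℝ) :
    matrixOperator d M x = M *ᵥ x := rfl

lemma continuous_matrixOperator (d : ℕ) : Continuous (matrixOperator d) :=
  (matrixOperator d).toLinearMap.continuous_of_finiteDimensional

lemma continuous_matrixOperator_symm (d : ℕ) : Continuous (matrixOperator d).symm :=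
  (matrixOperator d).symm.toLinearMap.continuous_of_finiteDimensional

lemma mem_urbanikD_iff {d : ℕ} {μ : Measure (Fin d → ℝ)} {K : Matrix (Fin d) (Fin d) ℝ} :
    K ∈ UrbanikD μ ↔ matrixOperator d K ∈ decompositionSemigroup μ := Iff.rfl

variable {Ω : Type*} [MeasurableSpace Ω] {P : Measure Ω} [IsProbabilityMeasure P] {d : ℕ}
  {X : ℕ → Ω → (Fin d → ℝ)}

theorem asymptoticallySplits_normalizedSum {A : ℕ → (Matrix (Fin d) (Fin d) ℝ)ˣ}
    (hX : ∀ j, Measurable (X j)) (hmix : StronglyMixing P X)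
    (hinf : Infinitesimal P (fun n => A n) X) (b : ℕ → Fin d → ℝ) :
    AsymptoticallySplits P (normalizedSum (fun n => A n) b X)
      fun m n => matrixOperator d (A n * (A m)⁻¹ : (Matrix (Fin d) (Fin d) ℝ)ˣ) := by
  intro m n hm hmn L C hL
  rw [NormedAddGroup.tendsto_nhds_zero]
  intro ε hε
  obtain ⟨g, hg⟩ := (hmix.eventually_lt_const (show 0 < ε / 16 by positivity)).exists
  obtain ⟨N, hN⟩ := hinf.exists_integral_norm_circleExp_le hX g C (show 0 < ε / 8 by positivity)
  filter_upwards [hm.eventually_ge_atTop N, hm.eventually_ge_atTop 1] with k hkN hk1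
  have hB : ∀ x, matrixOperator d (A (n k) * (A (m k))⁻¹ : (Matrix (Fin d) (Fin d) ℝ)ˣ)
      ((A (m k)).val *ᵥ x) = (A (n k)).val *ᵥ x := fun x => by
    rw [matrixOperator_apply, mulVec_mulVec, ← Units.val_mul, inv_mul_cancel_right]
  have hgap := hN (n k) (hkN.trans (hmn k)) (Finset.Ioc (m k) (min (n k) (m k + g)))
    (fun j hj => by simp only [Finset.mem_Ioc, Finset.mem_Icc] at hj ⊢; omega)
    (by simp only [Nat.card_Ioc]; omega) (L k) (hL k)
  linarith [norm_charFunDual_normalizedSum_sub_mul_le (P := P)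
    (A := fun n => (A n).val) (b := b) hX hk1 (hmn k) hB g (L k)]

theorem Infinitesimal.tendsto_zero {A : ℕ → Matrix (Fin d) (Fin d) ℝ} (hinf : Infinitesimal P A X)
    (hX : ∀ j, Measurable (X j)) {M : ℕ} (hM : IsNondegenerate (P.map (partialSum X M))) :
    Tendsto A atTop (𝓝 0) := by
  have hS := measurable_partialSum hX M
  let ρ : ProbabilityMeasure (Fin d → ℝ) :=
    ⟨P.map (partialSum X M), Measure.isProbabilityMeasure_map hS.aemeasurable⟩
  suffices h : Tendsto (fun n => matrixOperator d (A n)) atTop (𝓝 0) by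
    simpa [Function.comp_def] using ((continuous_matrixOperator_symm d).tendsto 0).comp h
  refine IsNondegenerate.tendsto_zero_of_tendsto_norm_charFunDual_comp (ρ := ρ) hM
    tendsto_const_nhds fun L C hL => ?_
  suffices h : Tendsto (fun n => charFunDual (P.map (partialSum X M))
      (L n ∘L matrixOperator d (A n))) atTop (𝓝 1) by simpa [ρ] using h.norm
  rw [tendsto_iff_norm_sub_tendsto_zero, NormedAddGroup.tendsto_nhds_zero]
  intro ε hε
  obtain ⟨N, hN⟩ := hinf.exists_integral_norm_circleExp_le hX M C (half_pos hε)
  filter_upwards [eventually_ge_atTop N, eventually_ge_atTop M] with n hnN hnM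
  have hint : Integrable (fun ω => (Circle.exp (L n (A n *ᵥ partialSum X M ω)) : ℂ)) P :=
    integrable_circleExp (by fun_prop)
  have hsub : charFunDual (P.map (partialSum X M)) (L n ∘L matrixOperator d (A n)) - 1 =
      ∫ ω, ((Circle.exp (L n (A n *ᵥ partialSum X M ω)) : ℂ) - 1) ∂P := by
    rw [charFunDual_map_eq_integral hS.aemeasurable, integral_sub hint (integrable_const _)]
    simp [matrixOperator_apply]
  rw [norm_norm, hsub]
  calc _ ≤ ∫ ω, ‖(Circle.exp (L n (A n *ᵥ partialSum X M ω)) : ℂ) - 1‖ ∂P :=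
        norm_integral_le_integral_norm _
    _ ≤ ε / 2 := hN n hnN _ (Finset.Icc_subset_Icc_right hnM) (by simp) (L n) (hL n)
    _ < ε := half_lt_self hε

theorem tendsto_zero_of_tendstoInDistribution_normalizedSum
    {A : ℕ → (Matrix (Fin d) (Fin d) ℝ)ˣ} (hX : ∀ j, Measurable (X j))
    (hinf : Infinitesimal P (fun n => A n) X) {b : ℕ → Fin d → ℝ} {μ : Measure (Fin d → ℝ)}
    [IsProbabilityMeasure μ] (hμ : IsNondegenerate μ)
    (hZ : TendstoInDistribution (normalizedSum (fun n => A n) b X) atTop id (fun _ => P) μ) :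
    Tendsto (fun n => (A n : Matrix (Fin d) (Fin d) ℝ)) atTop (𝓝 0) := by
  obtain ⟨M, hM⟩ := IsNondegenerate.exists_of_tendsto (ρ := ⟨μ, inferInstance⟩) hμ
    (tendsto_probabilityMeasure_map hZ)
  refine hinf.tendsto_zero hX (M := M) (IsNondegenerate.of_map (T := matrixOperator d (A M))
    (S := matrixOperator d (A M)⁻¹.val) ?_ (b M) ?_)
  · rw [← ContinuousLinearMap.mul_def, ← map_mul, Units.inv_mul, map_one]
    rfl
  · rwa [Measure.map_map (by fun_prop) (measurable_partialSum hX M)]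

end Limits

section Crossing

lemma exists_le_lt_succ_of_le_of_lt {α : Type*} [LinearOrder α] {h : ℕ → α} {c : α} {k n : ℕ}
    (hkn : k ≤ n) (hk : h k ≤ c) (hn : c < h n) : ∃ m, k ≤ m ∧ m < n ∧ h m ≤ c ∧ c < h (m + 1) := by
  by_contra! hcon
  refine hn.not_ge ?_
  suffices hall : ∀ m, k ≤ m → m ≤ n → h m ≤ c from hall n hkn le_rfl
  intro m hkm
  induction m, hkm using Nat.le_induction with
  | base => exact fun _ => hk
  | succ m hkm ih => exact fun hmn => hcon m hkm hmn (ih (Nat.le_of_succ_le hmn))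

theorem exists_eq_of_tendsto_mul_inv {R : Type*} [MonoidWithZero R] [TopologicalSpace R]
    [ContinuousMul R] {U : ℕ → Rˣ} (hU₀ : Tendsto (fun n => (U n : R)) atTop (𝓝 0))
    (hU₁ : Tendsto (fun n => ((U (n + 1) * (U n)⁻¹ : Rˣ) : R)) atTop (𝓝 1)) {S : Set R}
    (hS : IsSeqCompact S) {N : ℕ} (hUS : ∀ m n, N ≤ m → m ≤ n → ((U n * (U m)⁻¹ : Rˣ) : R) ∈ S)
    {f : R → ℝ} (hf : Continuous f) {c : ℝ} (h0 : f 0 < c) (h1 : c < f 1) :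
    ∃ (K : R) (m n : ℕ → ℕ), Tendsto m atTop atTop ∧ (∀ k, m k ≤ n k) ∧
      Tendsto (fun k => ((U (n k) * (U (m k))⁻¹ : Rˣ) : R)) atTop (𝓝 K) ∧ f K = c := by
  have hcross : ∀ k, ∃ m n, k ≤ m ∧ m < n ∧ f (U n * (U m)⁻¹ : Rˣ) ≤ c ∧
      c < f (U n * (U (m + 1))⁻¹ : Rˣ) := fun k => by
    have hlim : Tendsto (fun n => f (U n * (U k)⁻¹ : Rˣ)) atTop (𝓝 (f 0)) := by
      simpa [Function.comp_def] using (hf.tendsto _).comp (hU₀.mul_const ((U k)⁻¹ : Rˣ).val)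
    obtain ⟨n, hn, hkn⟩ := ((hlim.eventually_lt_const h0).and (eventually_ge_atTop k)).exists
    obtain ⟨m, hkm, hmn, hle, hlt⟩ := exists_le_lt_succ_of_le_of_lt
      (h := fun m => f (U n * (U m)⁻¹ : Rˣ)) hkn hn.le (by simpa using h1)
    exact ⟨m, n, hkm, hmn, hle, hlt⟩
  choose m n hkm hmn hle hlt using hcross
  have hm : Tendsto m atTop atTop := tendsto_atTop_mono hkm tendsto_id
  obtain ⟨K, -, φ, hφ, hK⟩ := hS (x := fun k => (U (n (k + N)) * (U (m (k + N) + 1))⁻¹ : Rˣ))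
    fun k => hUS _ _ (by linarith [hkm (k + N)]) (hmn _)
  have hmφ : Tendsto (fun k => m (φ k + N)) atTop atTop :=
    hm.comp (tendsto_add_atTop_nat N |>.comp hφ.tendsto_atTop)
  have hK' : Tendsto (fun k => ((U (n (φ k + N)) * (U (m (φ k + N)))⁻¹ : Rˣ) : R)) atTop (𝓝 K) := by
    have hmul := hK.mul (hU₁.comp hmφ)
    rw [mul_one] at hmul
    refine hmul.congr fun k => ?_
    simp [mul_assoc]
  exact ⟨K, _, _, hmφ, fun k => (hmn _).le, hK', le_antisymm
    (le_of_tendsto' ((hf.tendsto K).comp hK') fun k => hle _)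
    (ge_of_tendsto' ((hf.tendsto K).comp hK) fun k => (hlt _).le)⟩

end Crossing

section RestrictedDeterminant

lemma continuous_detJ {d : ℕ} (J : Matrix (Fin d) (Fin d) ℝ) : Continuous (detJ J) := by
  let p := LinearMap.range J.mulVecLin
  let e := Module.finBasis ℝ p
  have h : ∀ A, detJ J A = (Matrix.of fun i j =>
      e.repr ⟨(J * A * J) *ᵥ (e j : Fin d → ℝ), ⟨(A * J) *ᵥ (e j : Fin d → ℝ), by
        simp [Matrix.mul_assoc]⟩⟩ i).det := fun A => by
    unfold detJ
    rw [← LinearMap.det_toMatrix e]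
    congr 1
    ext i j
    rw [LinearMap.toMatrix_apply]
    rfl
  rw [funext h]
  refine Continuous.matrix_det (continuous_matrix fun i j => ?_)
  refine ((e.coord i).continuous_of_finiteDimensional).comp (Continuous.subtype_mk ?_ _)
  fun_prop

lemma detJ_one {d : ℕ} {J : Matrix (Fin d) (Fin d) ℝ} (hJ : J * J = J) : detJ J 1 = 1 := by
  unfold detJ
  convert LinearMap.det_id
  ext ⟨x, y, rfl⟩ : 2
  simp [hJ]

lemma detJ_zero {d : ℕ} {J : Matrix (Fin d) (Fin d) ℝ} (hJ : J ≠ 0) : detJ J 0 = 0 := by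
  unfold detJ
  have hne : Nontrivial (LinearMap.range J.mulVecLin) := by
    rw [Submodule.nontrivial_iff_ne_bot, Ne, LinearMap.range_eq_bot]
    exact fun h => hJ (Matrix.toLin'.injective (by
      rw [map_zero, Matrix.toLin'_apply']
      exact h))
  convert LinearMap.det_zero' (M := LinearMap.range J.mulVecLin) (Module.finBasis ℝ _)
  · ext ⟨x, y, rfl⟩ : 2
    simp
  · exact Fin.pos_iff_nonempty.1 Module.finrank_pos

end RestrictedDeterminant

theorem exists_detJ_eq_general
    {d : ℕ} {Ω : Type*} [MeasurableSpace Ω] (P : Measure Ω) [IsProbabilityMeasure P]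
    (X : ℕ → Ω → (Fin d → ℝ)) (hXmeas : ∀ j, Measurable (X j))
    (A : ℕ → Matrix (Fin d) (Fin d) ℝ) (hAinv : ∀ n, IsUnit (A n)) (b : ℕ → Fin d → ℝ)
    (hArat : Tendsto (fun n => A (n + 1) * (A n)⁻¹) atTop (𝓝 1))
    (μ : Measure (Fin d → ℝ)) [IsProbabilityMeasure μ] (hfull : IsFull μ)
    (hmix : StronglyMixing P X)
    (hinf : Infinitesimal P A X)
    (hconv : WeakLim (fun n => P.map (fun ω => (A n).mulVec (partialSum X n ω) + b n)) μ)
    {f : Matrix (Fin d) (Fin d) ℝ → ℝ} (hf : Continuous f) {c : ℝ} (h0 : f 0 < c) (h1 : c < f 1) :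
    ∃ K ∈ UrbanikD μ, f K = c := by
  lift A to ℕ → (Matrix (Fin d) (Fin d) ℝ)ˣ using hAinv
  have hZ : TendstoInDistribution (normalizedSum (fun n => (A n).val) b X) atTop id
      (fun _ => P) μ :=
    hconv.tendstoInDistribution (measurable_normalizedSum hXmeas)
  have hsplit := asymptoticallySplits_normalizedSum hXmeas hmix hinf b
  have hzero := tendsto_zero_of_tendstoInDistribution_normalizedSum hXmeas hinf
    hfull.isNondegenerate hZ
  obtain ⟨N, hN⟩ := hsplit.exists_norm_le hZ hfull.isNondegenerate
  have hcompact : IsSeqCompact ((matrixOperator d).symm '' Metric.closedBall 0 (N + 1)) :=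
    (isCompact_closedBall _ _).isSeqCompact.image (continuous_matrixOperator_symm d).seqContinuous
  obtain ⟨K, m, n, hm, hmn, hK, hfK⟩ := exists_eq_of_tendsto_mul_inv hzero
    (by simpa using hArat) hcompact
    (fun m n hm hmn => ⟨_, by simpa using hN m n hm hmn, (matrixOperator d).symm_apply_apply _⟩)
    hf h0 h1
  exact ⟨K, mem_urbanikD_iff.2 (hsplit.mem_decompositionSemigroup hZ hm hmn
    (((continuous_matrixOperator d).tendsto K).comp hK)), hfK⟩

/-- **Lemma 2.** Under strong mixing, infinitesimality, weak convergence to a full law,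
with invertible `A_n` satisfying `A_{n+1} A_n⁻¹ → I`: for every nonzero idempotent
`J ∈ D(μ)` and every `0 < c < 1` there is `K_c ∈ D(μ)` with `det_J K_c = c`. -/
theorem exists_detJ_eq
    {d : ℕ} {Ω : Type*} [MeasurableSpace Ω] (P : Measure Ω) [IsProbabilityMeasure P]
    (X : ℕ → Ω → (Fin d → ℝ)) (hXmeas : ∀ j, Measurable (X j))
    (A : ℕ → Matrix (Fin d) (Fin d) ℝ) (hAinv : ∀ n, IsUnit (A n)) (b : ℕ → Fin d → ℝ)
    (hArat : Tendsto (fun n => A (n + 1) * (A n)⁻¹) atTop (𝓝 1))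
    (μ : Measure (Fin d → ℝ)) [IsProbabilityMeasure μ] (hfull : IsFull μ)
    (hmix : StronglyMixing P X)
    (hinf : Infinitesimal P A X)
    (hconv : WeakLim (fun n => P.map (fun ω => (A n).mulVec (partialSum X n ω) + b n)) μ) :
    ∀ J ∈ UrbanikD μ, J ≠ 0 → J * J = J →
      ∀ c : ℝ, 0 < c → c < 1 → ∃ K ∈ UrbanikD μ, detJ J K = c :=
  fun J _ hJ0 hJJ _ hc0 hc1 => exists_detJ_eq_general P X hXmeas A hAinv b hArat μ hfull hmix hinf
    hconv (continuous_detJ J) ((detJ_zero hJ0).trans_lt hc0) (hc1.trans_eq (detJ_one hJJ).symm)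
end

section
/- Let X = (X_1, X_2, …) be a sequence of ℝ^d-valued random vectors with partial sums S_n := X_1 + … + X_n, let A_n be invertible d×d real matrices with A_{n+1} A_n^{−1} → I, and let b_n ∈ ℝ^d; assume (i) X is strongly mixing, (ii) the triangular array (A_n X_j : 1 ≤ j ≤ n, n ≥ 1) is infinitesimal, and (iii) the distributions of A_n S_n + b_n converge weakly to a full probability measure μ on ℝ^d. Then for every nonzero idempotent matrix J ∈ D(μ) there exist matrices T_n ∈ D(μ), n = 1, 2, …, such that J T_n = T_n J = T_n for every n, T_n → J as n → ∞, and for each fixed n, T_n^k → 0 as k → ∞. -/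
/-!
The corner `J D(μ) J` of an idempotent `J ∈ D(μ)` is a compact semigroup, because `μ` is full. When
`J` is minimal, an element of the corner either is left invertible relative to `J` or, since the
closure of its powers contains an idempotent, has powers tending to `0`. So it suffices to show that
`J` is a limit of elements that are not left invertible. If it were not, the left invertible and the
other elements would form two disjoint compact sets. Now follow the path `n ↦ J A_n A_m⁻¹ J` from
`J` at `n = m` to `0` at `n = ∞`. Strong mixing makes `A_m S_m` and the later summands of `A_n S_n`
asymptotically independent once a negligible gap is removed, so limits of `A_n A_m⁻¹` belong to
`D(μ)`; and `A_{n+1} A_n⁻¹ → 1` makes the steps of the path merge in the limit. Hence the path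
cannot jump from one compact set to the other. A nonminimal `J` is split as `K + (J - K)`, by
induction on the rank: an idempotent `K ∈ D(μ)` decomposes `μ` as `K μ ∗ (1 - K) μ`, so
contractions approximating `K` and `J - K` can be added.
-/

open MeasureTheory Filter Topology Matrix

section Convolution

open scoped Pointwise

variable {E : Type*} [NormedAddCommGroup E] [SecondCountableTopology E]
  [MeasurableSpace E] [BorelSpace E]

/-- Convolution of Borel probability measures, bundled so that weak convergence can be stated. -/
noncomputable def probConv (μ ν : ProbabilityMeasure E) : ProbabilityMeasure E :=
  (μ.prod ν).map (f := fun p => p.1 + p.2) (by fun_prop)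

lemma coe_probConv (μ ν : ProbabilityMeasure E) :
    (probConv μ ν : Measure E) = (μ : Measure E) ∗ (ν : Measure E) :=
  rfl

lemma probConv_comm (μ ν : ProbabilityMeasure E) : probConv μ ν = probConv ν μ :=
  Subtype.ext (Measure.conv_comm _ _)

lemma probConv_assoc (μ ν ξ : ProbabilityMeasure E) :
    probConv (probConv μ ν) ξ = probConv μ (probConv ν ξ) :=
  Subtype.ext (Measure.conv_assoc _ _ _)

lemma probConv_probConv_comm (μ ν ξ η : ProbabilityMeasure E) :
    probConv (probConv μ ν) (probConv ξ η) = probConv (probConv μ ξ) (probConv ν η) := by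
  rw [probConv_assoc, probConv_assoc, ← probConv_assoc ν, probConv_comm ν, probConv_assoc ξ]

lemma diracProba_zero_probConv (μ : ProbabilityMeasure E) : probConv (diracProba 0) μ = μ :=
  Subtype.ext (Measure.dirac_zero_conv _)

lemma probConv_diracProba (x y : E) :
    probConv (diracProba x) (diracProba y) = diracProba (x + y) :=
  Subtype.ext (Measure.dirac_conv_dirac x y)

lemma continuous_probConv :
    Continuous fun p : ProbabilityMeasure E × ProbabilityMeasure E => probConv p.1 p.2 :=
  (ProbabilityMeasure.continuous_map continuous_add).comp ProbabilityMeasure.continuous_prod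

lemma exists_tendsto_subseq_of_isTightMeasureSet {μ : ℕ → ProbabilityMeasure E}
    (h : IsTightMeasureSet (Set.range fun n => (μ n : Measure E))) :
    ∃ (ν : ProbabilityMeasure E) (φ : ℕ → ℕ), StrictMono φ ∧ Tendsto (μ ∘ φ) atTop (𝓝 ν) := by
  have hcomp : IsCompact (closure (Set.range μ)) := isCompact_closure_of_isTightMeasureSet <|
    h.subset <| by rintro _ ⟨_, ⟨n, rfl⟩, rfl⟩; exact ⟨n, rfl⟩
  obtain ⟨ν, -, φ, hφ, hlim⟩ := hcomp.isSeqCompact fun n => subset_closure ⟨n, rfl⟩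
  exact ⟨ν, φ, hφ, hlim⟩

lemma isTightMeasureSet_range_of_conv {κ ν : ℕ → Measure E} [∀ n, IsProbabilityMeasure (κ n)]
    [∀ n, IsProbabilityMeasure (ν n)]
    (hκ : IsTightMeasureSet (Set.range κ)) (h : IsTightMeasureSet (Set.range fun n => κ n ∗ ν n)) :
    IsTightMeasureSet (Set.range ν) := by
  rw [isTightMeasureSet_iff_exists_isCompact_measure_compl_le] at hκ h ⊢
  intro ε hε
  obtain ⟨K, hK, hκK⟩ := hκ (ε / 2) (ENNReal.half_pos hε.ne')
  obtain ⟨K', hK', hK'ν⟩ := h (ε / 2) (ENNReal.half_pos hε.ne')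
  refine ⟨K' - K, by simpa only [sub_eq_add_neg] using hK'.add hK.neg, ?_⟩
  rintro _ ⟨n, rfl⟩
  calc ν n (K' - K)ᶜ = (κ n).prod (ν n) (Prod.snd ⁻¹' (K' - K)ᶜ) := by
        rw [← Set.univ_prod, Measure.prod_prod, measure_univ, one_mul]
    _ ≤ (κ n).prod (ν n) (Prod.fst ⁻¹' Kᶜ ∪ (fun p => p.1 + p.2) ⁻¹' K'ᶜ) := by
        refine measure_mono fun p hp => ?_
        by_contra hcon
        simp only [Set.mem_union, Set.mem_preimage, Set.mem_compl_iff, not_or, not_not] at hcon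
        exact hp ⟨_, hcon.2, _, hcon.1, add_sub_cancel_left _ _⟩
    _ ≤ κ n Kᶜ + (κ n ∗ ν n) K'ᶜ := by
        refine (measure_union_le _ _).trans_eq ?_
        rw [Measure.conv, Measure.map_apply (by fun_prop) hK'.measurableSet.compl, ← Set.prod_univ,
          Measure.prod_prod, measure_univ, mul_one]
    _ ≤ ε / 2 + ε / 2 := add_le_add (hκK _ ⟨n, rfl⟩) (hK'ν _ ⟨n, rfl⟩)
    _ = ε := ENNReal.add_halves ε

variable [CompleteSpace E]

lemma isTightMeasureSet_range_of_tendsto {μ : ℕ → ProbabilityMeasure E} {ν : ProbabilityMeasure E}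
    (h : Tendsto μ atTop (𝓝 ν)) : IsTightMeasureSet (Set.range fun n => (μ n : Measure E)) := by
  refine (isTightMeasureSet_of_isCompact_closure
    (h.isCompact_insert_range.closure_of_subset (Set.subset_insert _ _))).subset ?_
  rintro _ ⟨n, rfl⟩
  exact ⟨μ n, ⟨n, rfl⟩, rfl⟩

lemma exists_eq_probConv_of_tendsto {κ ν : ℕ → ProbabilityMeasure E}
    {κ₀ η : ProbabilityMeasure E} (hκ : Tendsto κ atTop (𝓝 κ₀))
    (h : Tendsto (fun n => probConv (κ n) (ν n)) atTop (𝓝 η)) :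
    ∃ ν₀, η = probConv κ₀ ν₀ := by
  have htight : IsTightMeasureSet (Set.range fun n => (ν n : Measure E)) :=
    isTightMeasureSet_range_of_conv (κ := fun n => (κ n : Measure E))
      (isTightMeasureSet_range_of_tendsto hκ) (isTightMeasureSet_range_of_tendsto h :)
  obtain ⟨ν₀, φ, hφ, hν⟩ := exists_tendsto_subseq_of_isTightMeasureSet htight
  have hpair : Tendsto (fun n => (κ (φ n), ν (φ n))) atTop (𝓝 (κ₀, ν₀)) :=
    (hκ.comp hφ.tendsto_atTop).prodMk_nhds hν
  have hlim := (continuous_probConv.tendsto _).comp hpair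
  exact ⟨ν₀, tendsto_nhds_unique (h.comp hφ.tendsto_atTop) hlim⟩

end Convolution

lemma continuous_map_uncurry {X Y Z : Type*} [TopologicalSpace X] [TopologicalSpace Y]
    [TopologicalSpace Z] [SecondCountableTopology X] [TopologicalSpace.PseudoMetrizableSpace X]
    [SecondCountableTopology Y] [TopologicalSpace.PseudoMetrizableSpace Y]
    [MeasurableSpace Y] [BorelSpace Y] [MeasurableSpace Z] [BorelSpace Z]
    {f : X → Y → Z} (hf : Continuous (Function.uncurry f)) :
    Continuous fun p : X × ProbabilityMeasure Y =>
      p.2.map (hf.uncurry_left p.1).measurable.aemeasurable := by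
  borelize X
  have heq : (fun p : X × ProbabilityMeasure Y =>
      p.2.map (hf.uncurry_left p.1).measurable.aemeasurable) =
      fun p => ((diracProba p.1).prod p.2).map hf.measurable.aemeasurable := by
    funext p
    apply Subtype.ext
    change _ = ((Measure.dirac p.1).prod (p.2 : Measure Y)).map (Function.uncurry f)
    rw [Measure.dirac_prod, Measure.map_map hf.measurable (by fun_prop)]
    rfl
  rw [heq]
  exact (ProbabilityMeasure.continuous_map hf).comp (ProbabilityMeasure.continuous_prod.comp
    ((continuous_diracProba.comp continuous_fst).prodMk continuous_snd))

section CharFunDual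

variable {E : Type*} [NormedAddCommGroup E] [NormedSpace ℝ E] [MeasurableSpace E]

lemma charFunDual_eq_one_iff {κ : Measure E} [IsProbabilityMeasure κ] {L : StrongDual ℝ E} :
    charFunDual κ L = 1 ↔ ∀ᵐ x ∂κ, Complex.exp (L x * Complex.I) = 1 := by
  refine ⟨fun h => ?_, fun h => ?_⟩
  · have hnorm : ∀ᵐ x ∂κ, ‖Complex.exp (L x * Complex.I)‖ ≤ 1 :=
      .of_forall fun x => (Complex.norm_exp_ofReal_mul_I _).le
    rw [charFunDual_apply] at h
    rcases ae_eq_const_or_norm_integral_lt_of_norm_le_const hnorm with hconst | hlt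
    · rw [average_eq_integral, h] at hconst
      exact hconst
    · simp [h] at hlt
  · rw [charFunDual_apply, integral_congr_ae h]
    simp

variable [BorelSpace E]

lemma tendsto_of_tendsto_charFunDual [FiniteDimensional ℝ E] {μ : ℕ → ProbabilityMeasure E}
    {ν : ProbabilityMeasure E}
    (h : ∀ L, Tendsto (fun n => charFunDual (μ n : Measure E) L) atTop
      (𝓝 (charFunDual (ν : Measure E) L))) :
    Tendsto μ atTop (𝓝 ν) := by
  let e := toEuclidean (E := E)
  let push (κ : ProbabilityMeasure E) := κ.map e.continuous.measurable.aemeasurable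
  have push_symm (κ : ProbabilityMeasure E) :
      (push κ).map e.symm.continuous.measurable.aemeasurable = κ := Subtype.ext <| by
    simp [push, Measure.map_map e.symm.continuous.measurable e.continuous.measurable]
  have charFun_push (κ : ProbabilityMeasure E) t : charFun (push κ : Measure _) t =
      charFunDual (κ : Measure E)
        (InnerProductSpace.toDualMap ℝ _ t ∘L e.toContinuousLinearMap) := by
    rw [charFun_eq_charFunDual_toDualMap, ← charFunDual_map]
    rfl
  have hpush : Tendsto (fun n => push (μ n)) atTop (𝓝 (push ν)) := by
    rw [ProbabilityMeasure.tendsto_iff_tendsto_charFun]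
    simpa only [charFun_push] using fun t => h _
  simpa only [push_symm] using
    ProbabilityMeasure.tendsto_map_of_tendsto_of_continuous _ _ hpush e.symm.continuous

lemma tendsto_charFunDual_of_tendsto {ι : Type*} {l : Filter ι} {μ : ι → ProbabilityMeasure E}
    {ν : ProbabilityMeasure E} (h : Tendsto μ l (𝓝 ν)) (L : StrongDual ℝ E) :
    Tendsto (fun n => charFunDual (μ n : Measure E) L) l (𝓝 (charFunDual (ν : Measure E) L)) :=
  (ProbabilityMeasure.tendsto_iff_forall_integral_rclike_tendsto ℂ).1 h
    (BoundedContinuousFunction.probCharDual L)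

lemma tendsto_charFunDual_smul (κ : Measure E) [IsProbabilityMeasure κ] (L : StrongDual ℝ E) :
    Tendsto (fun t : ℝ => charFunDual κ (t • L)) (𝓝 0) (𝓝 1) := by
  have := Measure.isProbabilityMeasure_map (μ := κ) L.measurable.aemeasurable
  simp_rw [← charFun_map_eq_charFunDual_smul]
  simpa using (continuous_charFun (μ := κ.map L)).tendsto 0

lemma eq_dirac_zero_of_conv_eq_self [SecondCountableTopology E] [CompleteSpace E]
    {κ ν : Measure E} [IsProbabilityMeasure κ] [IsProbabilityMeasure ν] (h : κ ∗ ν = κ) :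
    ν = Measure.dirac 0 := by
  refine Measure.ext_of_charFunDual (funext fun L => ?_)
  have hmul (M : StrongDual ℝ E) : charFunDual κ M * charFunDual ν M = charFunDual κ M := by
    rw [← charFunDual_conv, h]
  have hinv : Tendsto (fun n : ℕ => (n : ℝ)⁻¹) atTop (𝓝 0) := tendsto_inv_atTop_nhds_zero_nat
  obtain ⟨n, hn, hn₀⟩ := (((tendsto_charFunDual_smul κ L).comp hinv).eventually_ne
    one_ne_zero |>.and (eventually_ne_atTop 0)).exists
  have hroot : charFunDual ν ((n : ℝ)⁻¹ • L) = 1 := (mul_eq_left₀ hn).1 (hmul _)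
  rw [charFunDual_dirac, map_zero, Complex.ofReal_zero, zero_mul, Complex.exp_zero,
    charFunDual_eq_one_iff]
  filter_upwards [charFunDual_eq_one_iff.1 hroot] with x hx
  calc Complex.exp (L x * Complex.I)
      = Complex.exp (((n : ℝ)⁻¹ • L) x * Complex.I) ^ n := by
        rw [← Complex.exp_nat_mul]
        congr 1
        simp only [_root_.smul_apply, smul_eq_mul]
        push_cast
        field_simp
    _ = 1 := by rw [hx, one_pow]

end CharFunDual

lemma exists_ae_eq_const_of_conv_eq_dirac {E : Type*} [AddGroup E] [MeasurableSpace E]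
    [MeasurableSingletonClass E] [MeasurableAdd₂ E] {κ ν : Measure E} [IsProbabilityMeasure κ]
    [SFinite ν] {z : E} (h : κ ∗ ν = Measure.dirac z) : ∃ c, ∀ᵐ y ∂ν, y = c := by
  have hsum : ∀ᵐ p ∂(κ.prod ν), p.1 + p.2 = z := by
    refine ae_of_ae_map (p := (· = z)) (by fun_prop) ?_
    rw [← Measure.conv, h, ae_dirac_eq]
    exact eventually_pure.2 rfl
  obtain ⟨x, hx⟩ := (Measure.ae_ae_of_ae_prod hsum).exists
  exact ⟨-x + z, hx.mono fun y hy => eq_neg_add_of_add_eq hy⟩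

section Mixing

variable {Ω : Type*} {m m₁ m₂ m₀ : MeasurableSpace Ω} {P : Measure Ω}

lemma integral_abs_le_two_mul_of_abs_setIntegral_le {u : Ω → ℝ} {a : ℝ}
    (hu : StronglyMeasurable[m] u) (hint : Integrable u P)
    (h : ∀ s, MeasurableSet[m] s → |∫ ω in s, u ω ∂P| ≤ a) : ∫ ω, |u ω| ∂P ≤ 2 * a := by
  have hpos : MeasurableSet[m] {ω | 0 ≤ u ω} := stronglyMeasurable_const.measurableSet_le hu
  have hneg : MeasurableSet[m] {ω | u ω ≤ 0} := hu.measurableSet_le stronglyMeasurable_const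
  calc ∫ ω, |u ω| ∂P = ∫ ω in {ω | 0 ≤ u ω}, u ω ∂P - ∫ ω in {ω | u ω ≤ 0}, u ω ∂P :=
        integral_norm_eq_pos_sub_neg hint
    _ ≤ |∫ ω in {ω | 0 ≤ u ω}, u ω ∂P| + |∫ ω in {ω | u ω ≤ 0}, u ω ∂P| :=
        (le_abs_self _).trans (abs_sub _ _)
    _ ≤ 2 * a := by linarith [h _ hpos, h _ hneg]

lemma integral_norm_le_four_mul_of_norm_setIntegral_le {g : Ω → ℂ} {a : ℝ}
    (hg : StronglyMeasurable[m] g) (hint : Integrable g P)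
    (h : ∀ s, MeasurableSet[m] s → ‖∫ ω in s, g ω ∂P‖ ≤ a) : ∫ ω, ‖g ω‖ ∂P ≤ 4 * a := by
  have hre : ∫ ω, |(g ω).re| ∂P ≤ 2 * a :=
    integral_abs_le_two_mul_of_abs_setIntegral_le
      (Complex.continuous_re.comp_stronglyMeasurable hg) hint.re fun s hs =>
      (congrArg abs (integral_re hint.integrableOn)).trans_le <|
        (Complex.abs_re_le_norm _).trans (h s hs)
  have him : ∫ ω, |(g ω).im| ∂P ≤ 2 * a :=
    integral_abs_le_two_mul_of_abs_setIntegral_le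
      (Complex.continuous_im.comp_stronglyMeasurable hg) hint.im fun s hs =>
      (congrArg abs (integral_im hint.integrableOn)).trans_le <|
        (Complex.abs_im_le_norm _).trans (h s hs)
  calc ∫ ω, ‖g ω‖ ∂P ≤ ∫ ω, |(g ω).re| + |(g ω).im| ∂P :=
        integral_mono hint.norm (hint.re.abs.add hint.im.abs) fun _ =>
          Complex.norm_le_abs_re_add_abs_im _
    _ = ∫ ω, |(g ω).re| ∂P + ∫ ω, |(g ω).im| ∂P := integral_add hint.re.abs hint.im.abs
    _ ≤ 4 * a := by linarith

lemma norm_integral_mul_le_four_mul_of_norm_setIntegral_le [IsFiniteMeasure P] {f h : Ω → ℂ}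
    {a : ℝ} (hm : m ≤ m₀) (hf : StronglyMeasurable[m] f) (hf_le : ∀ ω, ‖f ω‖ ≤ 1)
    (hint : Integrable h P) (hh : ∀ s, MeasurableSet[m] s → ‖∫ ω in s, h ω ∂P‖ ≤ a) :
    ‖∫ ω, f ω * h ω ∂P‖ ≤ 4 * a := by
  have hfh : Integrable (fun ω => f ω * h ω) P :=
    hint.bdd_mul (hf.mono hm).aestronglyMeasurable (.of_forall hf_le)
  have hpull : P[fun ω => f ω * h ω | m] =ᵐ[P] fun ω => f ω * (P[h | m]) ω :=
    condExp_bilin_of_stronglyMeasurable_left (ContinuousLinearMap.mul ℝ ℂ) hf hfh hint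
  calc ‖∫ ω, f ω * h ω ∂P‖ = ‖∫ ω, f ω * (P[h | m]) ω ∂P‖ := by
        rw [← integral_congr_ae hpull, integral_condExp hm]
    _ ≤ ∫ ω, ‖(P[h | m]) ω‖ ∂P :=
        norm_integral_le_of_norm_le integrable_condExp.norm <| .of_forall fun ω => by
          rw [norm_mul]
          exact mul_le_of_le_one_left (norm_nonneg _) (hf_le ω)
    _ ≤ 4 * a :=
        integral_norm_le_four_mul_of_norm_setIntegral_le stronglyMeasurable_condExp
          integrable_condExp fun s hs => by
          rw [setIntegral_condExp hm hint hs]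
          exact hh s hs

lemma abs_measureReal_inter_sub_le_one [IsProbabilityMeasure P] (A B : Set Ω) :
    |P.real (A ∩ B) - P.real A * P.real B| ≤ 1 :=
  abs_sub_le_of_nonneg_of_le measureReal_nonneg measureReal_le_one
    (mul_nonneg measureReal_nonneg measureReal_nonneg)
    (mul_le_one₀ measureReal_le_one measureReal_nonneg measureReal_le_one)

lemma alphaSig_nonneg : 0 ≤ alphaSig P m₁ m₂ :=
  Real.sSup_nonneg <| by
    rintro _ ⟨A, B, -, -, rfl⟩
    exact abs_nonneg _

lemma abs_measureReal_inter_sub_le_alphaSig [IsProbabilityMeasure P] {A B : Set Ω}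
    (hA : MeasurableSet[m₁] A) (hB : MeasurableSet[m₂] B) :
    |P.real (A ∩ B) - P.real A * P.real B| ≤ alphaSig P m₁ m₂ := by
  refine le_csSup ⟨1, ?_⟩ ⟨A, B, hA, hB, rfl⟩
  rintro _ ⟨C, D, -, -, rfl⟩
  exact abs_measureReal_inter_sub_le_one C D

lemma norm_setIntegral_sub_integral_le_alphaSig [IsProbabilityMeasure P] {f : Ω → ℂ}
    (hm₁ : m₁ ≤ m₀) (hm₂ : m₂ ≤ m₀) (hf : StronglyMeasurable[m₁] f) (hf_le : ∀ ω, ‖f ω‖ ≤ 1)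
    {B : Set Ω} (hB : MeasurableSet[m₂] B) :
    ‖∫ ω in B, (f ω - ∫ ω', f ω' ∂P) ∂P‖ ≤ 4 * alphaSig P m₁ m₂ := by
  have hf_int : Integrable f P :=
    .of_bound (hf.mono hm₁).aestronglyMeasurable 1 (.of_forall hf_le)
  let h : Ω → ℂ := fun ω => B.indicator 1 ω - P.real B
  have hind : Integrable (B.indicator (1 : Ω → ℂ)) P :=
    (integrable_const (1 : ℂ)).indicator (hm₂ _ hB)
  have h_set (A : Set Ω) (hA : MeasurableSet[m₁] A) : ‖∫ ω in A, h ω ∂P‖ ≤ alphaSig P m₁ m₂ := by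
    have : ∫ ω in A, h ω ∂P = ((P.real (A ∩ B) - P.real A * P.real B : ℝ) : ℂ) := by
      rw [integral_sub hind.integrableOn (integrable_const _),
        setIntegral_indicator (hm₂ _ hB)]
      simp
    rw [this, Complex.norm_real]
    exact abs_measureReal_inter_sub_le_alphaSig hA hB
  have hswap : ∫ ω in B, (f ω - ∫ ω', f ω' ∂P) ∂P = ∫ ω, f ω * h ω ∂P := by
    have hfB : ∀ ω, f ω * h ω = B.indicator f ω - f ω * P.real B := fun ω => by
      by_cases hω : ω ∈ B <;> simp [h, hω, mul_sub]
    simp_rw [hfB]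
    rw [integral_sub hf_int.integrableOn (integrable_const _),
      integral_sub (hf_int.indicator (hm₂ _ hB)) (hf_int.mul_const _),
      integral_indicator (hm₂ _ hB), setIntegral_const, integral_mul_const]
    simp [mul_comm]
  rw [hswap]
  exact norm_integral_mul_le_four_mul_of_norm_setIntegral_le hm₁ hf hf_le
    (hind.sub (integrable_const _)) h_set

lemma norm_integral_mul_sub_le_alphaSig_s9 [IsProbabilityMeasure P] {f g : Ω → ℂ}
    (hm₁ : m₁ ≤ m₀) (hm₂ : m₂ ≤ m₀) (hf : StronglyMeasurable[m₁] f) (hf_le : ∀ ω, ‖f ω‖ ≤ 1)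
    (hg : StronglyMeasurable[m₂] g) (hg_le : ∀ ω, ‖g ω‖ ≤ 1) :
    ‖∫ ω, f ω * g ω ∂P - (∫ ω, f ω ∂P) * ∫ ω, g ω ∂P‖ ≤ 16 * alphaSig P m₁ m₂ := by
  have hf_int : Integrable f P :=
    .of_bound (hf.mono hm₁).aestronglyMeasurable 1 (.of_forall hf_le)
  have hg_int : Integrable g P :=
    .of_bound (hg.mono hm₂).aestronglyMeasurable 1 (.of_forall hg_le)
  have hgf_int : Integrable (fun ω => g ω * f ω) P :=
    hf_int.bdd_mul (hg.mono hm₂).aestronglyMeasurable (.of_forall hg_le)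
  have hcov : ∫ ω, f ω * g ω ∂P - (∫ ω, f ω ∂P) * ∫ ω, g ω ∂P =
      ∫ ω, g ω * (f ω - ∫ ω', f ω' ∂P) ∂P := by
    simp_rw [mul_sub, mul_comm (f _)]
    rw [integral_sub hgf_int (hg_int.mul_const _), integral_mul_const, mul_comm (∫ ω, f ω ∂P)]
  rw [hcov]
  refine (norm_integral_mul_le_four_mul_of_norm_setIntegral_le hm₂ hg hg_le
    (hf_int.sub (integrable_const _)) fun B hB =>
      norm_setIntegral_sub_integral_le_alphaSig hm₁ hm₂ hf hf_le hB).trans_eq ?_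
  ring

variable {E : Type*} [NormedAddCommGroup E] [NormedSpace ℝ E] [MeasurableSpace E] [BorelSpace E]

lemma norm_charFunDual_map_add_sub_le_alphaSig [IsProbabilityMeasure P]
    [SecondCountableTopology E] {U V : Ω → E}
    (hm₁ : m₁ ≤ m₀) (hm₂ : m₂ ≤ m₀) (hU : Measurable[m₁] U) (hV : Measurable[m₂] V)
    (L : StrongDual ℝ E) :
    ‖charFunDual (P.map (U + V)) L - charFunDual (P.map U) L * charFunDual (P.map V) L‖ ≤
      16 * alphaSig P m₁ m₂ := by
  have hU' : Measurable U := hU.mono hm₁ le_rfl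
  have hV' : Measurable V := hV.mono hm₂ le_rfl
  have hexp : Measurable fun x : E => Complex.exp (L x * Complex.I) := by fun_prop
  have charFunDual_law {W : Ω → E} (hW : Measurable W) :
      charFunDual (P.map W) L = ∫ ω, Complex.exp (L (W ω) * Complex.I) ∂P := by
    rw [charFunDual_apply, integral_map hW.aemeasurable hexp.aestronglyMeasurable]
  rw [charFunDual_law (hU'.add hV'), charFunDual_law hU', charFunDual_law hV']
  simp_rw [Pi.add_apply, map_add, Complex.ofReal_add, add_mul, Complex.exp_add]
  exact norm_integral_mul_sub_le_alphaSig_s9 hm₁ hm₂ (hexp.comp hU).stronglyMeasurable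
    (fun ω => (Complex.norm_exp_ofReal_mul_I _).le) (hexp.comp hV).stronglyMeasurable
    (fun ω => (Complex.norm_exp_ofReal_mul_I _).le)

lemma tendsto_probConv_of_tendsto_alphaSig [FiniteDimensional ℝ E] {P : ProbabilityMeasure Ω}
    {μ : ProbabilityMeasure E} {M₁ M₂ : ℕ → MeasurableSpace Ω} {U V : ℕ → Ω → E}
    (hM₁ : ∀ n, M₁ n ≤ m₀) (hM₂ : ∀ n, M₂ n ≤ m₀)
    (hU : ∀ n, Measurable[M₁ n] (U n)) (hV : ∀ n, Measurable[M₂ n] (V n))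
    (hU' : ∀ n, AEMeasurable (U n) P) (hV' : ∀ n, AEMeasurable (V n) P)
    (hα : Tendsto (fun n => alphaSig (P : Measure Ω) (M₁ n) (M₂ n)) atTop (𝓝 0))
    (h : Tendsto (fun n => P.map ((hU' n).add (hV' n))) atTop (𝓝 μ)) :
    Tendsto (fun n => probConv (P.map (hU' n)) (P.map (hV' n))) atTop (𝓝 μ) := by
  refine tendsto_of_tendsto_charFunDual fun L => ?_
  have hdiff : Tendsto (fun n => charFunDual (P.map ((hU' n).add (hV' n)) : Measure E) L -
      charFunDual (probConv (P.map (hU' n)) (P.map (hV' n)) : Measure E) L) atTop (𝓝 0) := by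
    refine squeeze_zero_norm (fun n => ?_) (by simpa using hα.const_mul 16)
    rw [coe_probConv, charFunDual_conv]
    exact norm_charFunDual_map_add_sub_le_alphaSig (hM₁ n) (hM₂ n) (hU n) (hV n) L
  simpa using (tendsto_charFunDual_of_tendsto h L).sub hdiff

end Mixing

section CompactSemigroup

lemma pow_succ_mem_of_mem {M : Type*} [Monoid M] {H : Subsemigroup M} {T : M} (hT : T ∈ H)
    (k : ℕ) : T ^ (k + 1) ∈ H := by
  induction k with
  | zero => rwa [zero_add, pow_one]
  | succ k ih => rw [pow_succ]; exact H.mul_mem ih hT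

lemma exists_isIdempotentElem_mul_mem_closure {M : Type*} [Monoid M] [TopologicalSpace M]
    [T2Space M] [ContinuousMul M] {H : Subsemigroup M} (hH : IsCompact (H : Set M)) {T : M}
    (hT : T ∈ H) :
    ∃ S ∈ H, IsIdempotentElem (S * T) ∧ S * T ∈ closure (Set.range (T ^ ·)) := by
  let s : Set M := Set.range fun k : ℕ => T ^ (k + 1) * T
  have hs : closure s ⊆ (· * T) '' H := closure_minimal
    (by rintro _ ⟨k, rfl⟩; exact ⟨T ^ (k + 1), pow_succ_mem_of_mem hT k, rfl⟩)
    (hH.image (continuous_mul_const T)).isClosed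
  have hs_compact : IsCompact (closure s) :=
    (hH.image (continuous_mul_const T)).of_isClosed_subset isClosed_closure hs
  have hs_mul : ∀ x ∈ closure s, ∀ y ∈ closure s, x * y ∈ closure s := fun x hx y hy => by
    refine map_mem_closure₂ continuous_mul hx hy ?_
    rintro _ ⟨k, rfl⟩ _ ⟨l, rfl⟩
    refine ⟨k + l + 2, ?_⟩
    simp only [← pow_succ, ← pow_add]
    congr 1
    omega
  obtain ⟨K, hK, hKK⟩ := exists_idempotent_in_compact_subsemigroup
    (fun r : M => continuous_mul_const r) (closure s) (Set.range_nonempty _).closure hs_compact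
    hs_mul
  obtain ⟨S, hS, rfl⟩ := hs hK
  refine ⟨S, hS, hKK, closure_mono ?_ hK⟩
  rintro _ ⟨k, rfl⟩
  exact ⟨k + 2, pow_succ T (k + 1)⟩

lemma isTopologicallyNilpotent_of_zero_mem_closure {R : Type*} [NormedRing R]
    {H : Subsemigroup R} (hH : Bornology.IsBounded (H : Set R)) {T : R} (hT : T ∈ H)
    (h : 0 ∈ closure (Set.range (T ^ ·))) : IsTopologicallyNilpotent T := by
  obtain ⟨c, hc, hcH⟩ := hH.exists_pos_norm_le
  refine Metric.tendsto_atTop.2 fun ε hε => ?_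
  obtain ⟨_, ⟨k, rfl⟩, hk⟩ := Metric.mem_closure_iff.1 h (ε / c) (by positivity)
  rw [dist_zero_left, lt_div_iff₀ hc] at hk
  refine ⟨k + 1, fun n hn => ?_⟩
  rw [dist_zero_right]
  calc ‖T ^ n‖ = ‖T ^ k * T ^ (n - (k + 1) + 1)‖ := by rw [← pow_add]; congr 2; omega
    _ ≤ ‖T ^ k‖ * c := (norm_mul_le _ _).trans (by gcongr; exact hcH _ (pow_succ_mem_of_mem hT _))
    _ < ε := hk

/-- The elements of the semigroup `H` that are left invertible relative to `J`, which in the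
applications is the identity element of `H`. -/
def leftInvertible {M : Type*} [Mul M] (H : Subsemigroup M) (J : M) : Set M :=
  {T | T ∈ H ∧ ∃ S ∈ H, S * T = J}

lemma isCompact_leftInvertible {M : Type*} [Semigroup M] [TopologicalSpace M] [T2Space M]
    [ContinuousMul M] {H : Subsemigroup M} (hH : IsCompact (H : Set M)) (J : M) :
    IsCompact (leftInvertible H J) := by
  have himage : leftInvertible H J =
      Prod.snd '' (((H : Set M) ×ˢ (H : Set M)) ∩ {p | p.1 * p.2 = J}) := by
    ext T
    constructor
    · rintro ⟨hT, S, hS, hST⟩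
      exact ⟨(S, T), ⟨⟨hS, hT⟩, hST⟩, rfl⟩
    · rintro ⟨⟨S, T⟩, ⟨⟨hS, hT⟩, hST⟩, rfl⟩
      exact ⟨hT, S, hS, hST⟩
  rw [himage]
  exact ((hH.prod hH).inter_right (isClosed_eq continuous_mul continuous_const)).image
    continuous_snd

lemma mem_closure_diff_leftInvertible {M : Type*} [Semigroup M] [TopologicalSpace M]
    [ContinuousMul M] {H : Subsemigroup M} {J : M}
    (h : (leftInvertible H J ∩ closure (↑H \ leftInvertible H J)).Nonempty) :
    J ∈ closure (↑H \ leftInvertible H J) := by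
  obtain ⟨T, ⟨-, S, hS, rfl⟩, hT⟩ := h
  refine map_mem_closure (continuous_const_mul S) hT fun T' hT' => ⟨H.mul_mem hS hT'.1, ?_⟩
  rintro ⟨-, S', hS', hS'T'⟩
  exact hT'.2 ⟨hT'.1, S' * S, H.mul_mem hS' hS, by rw [mul_assoc, hS'T']⟩

lemma isTopologicallyNilpotent_of_notMem_leftInvertible {R : Type*} [NormedRing R]
    {H : Subsemigroup R} (hH : IsCompact (H : Set R)) {J : R}
    (hmin : ∀ K ∈ H, IsIdempotentElem K → K = 0 ∨ K = J) {T : R} (hT : T ∈ H)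
    (hTJ : T ∉ leftInvertible H J) : IsTopologicallyNilpotent T := by
  obtain ⟨S, hS, hidem, hclosure⟩ := exists_isIdempotentElem_mul_mem_closure hH hT
  rcases hmin _ (H.mul_mem hS hT) hidem with hzero | hJ
  · exact isTopologicallyNilpotent_of_zero_mem_closure hH.isBounded hT (hzero ▸ hclosure)
  · exact (hTJ ⟨hT, S, hS, hJ⟩).elim

/-- The steps `F m n`, `F m (n + 1)` merge along subsequences as `m → ∞`, so a path leading from
`K₁` to `K₂` cannot jump over a gap between them. -/
lemma inter_nonempty_of_tendsto_steps {E : Type*} [TopologicalSpace E] [T2Space E] {K₁ K₂ : Set E}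
    (hK₁ : IsCompact K₁) (hK₂ : IsCompact K₂) {F : ℕ → ℕ → E} (hF₁ : ∀ m, F m m ∈ K₁) {x : E}
    (hx : x ∈ K₂) (hF₂ : ∀ m, Tendsto (F m) atTop (𝓝 x))
    (hstep : ∀ n : ℕ → ℕ, (∀ m, m ≤ n m) → ∃ B ∈ K₁ ∪ K₂, ∃ φ : ℕ → ℕ,
      Tendsto (fun k => F (φ k) (n (φ k))) atTop (𝓝 B) ∧
        Tendsto (fun k => F (φ k) (n (φ k) + 1)) atTop (𝓝 B)) :
    (K₁ ∩ K₂).Nonempty := by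
  by_contra hdisj
  obtain ⟨U₁, U₂, hU₁, hU₂, hKU₁, hKU₂, hU⟩ := SeparatedNhds.of_isCompact_isCompact hK₁ hK₂
    (Set.disjoint_iff_inter_eq_empty.2 (Set.not_nonempty_iff_eq_empty.1 hdisj))
  have hexit (m : ℕ) : ∃ n, m ≤ n ∧ F m n ∈ U₁ ∧ F m (n + 1) ∉ U₁ := by
    by_contra! hstay
    have hmem : ∀ n, m ≤ n → F m n ∈ U₁ := fun n hn => by
      induction n, hn using Nat.le_induction with
      | base => exact hKU₁ (hF₁ m)
      | succ n hn ih => exact hstay n hn ih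
    obtain ⟨n, hnU₂, hn⟩ :=
      (((hF₂ m).eventually_mem (hU₂.mem_nhds (hKU₂ hx))).and (eventually_ge_atTop m)).exists
    exact Set.disjoint_left.1 hU (hmem n hn) hnU₂
  choose n hmn hin hout using hexit
  obtain ⟨B, hB, φ, hlim, hlim_succ⟩ := hstep n hmn
  have hBU₁ : B ∉ U₁ := hU₁.isClosed_compl.mem_of_tendsto hlim_succ (.of_forall fun _ => hout _)
  have hBU₂ : B ∈ U₂ := hKU₂ (hB.resolve_left fun hB₁ => hBU₁ (hKU₁ hB₁))
  obtain ⟨k, hk⟩ := (hlim.eventually_mem (hU₂.mem_nhds hBU₂)).exists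
  exact Set.disjoint_left.1 hU (hin _) hk

lemma mem_closure_isTopologicallyNilpotent {R : Type*} [NormedRing R] {H : Subsemigroup R}
    (hH : IsCompact (H : Set R)) (h₀ : 0 ∈ H) {J : R} (hJ : J ∈ H) (hJJ : IsIdempotentElem J)
    (hJ₀ : J ≠ 0) (hmin : ∀ K ∈ H, IsIdempotentElem K → K = 0 ∨ K = J) {F : ℕ → ℕ → R}
    (hF : ∀ m, F m m = J) (hF₀ : ∀ m, Tendsto (F m) atTop (𝓝 0))
    (hstep : ∀ n : ℕ → ℕ, (∀ m, m ≤ n m) → ∃ B ∈ H, ∃ φ : ℕ → ℕ,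
      Tendsto (fun k => F (φ k) (n (φ k))) atTop (𝓝 B) ∧
        Tendsto (fun k => F (φ k) (n (φ k) + 1)) atTop (𝓝 B)) :
    J ∈ closure {T | T ∈ H ∧ IsTopologicallyNilpotent T} := by
  have hnil : (H : Set R) \ leftInvertible H J ⊆ {T | T ∈ H ∧ IsTopologicallyNilpotent T} :=
    fun T hT => ⟨hT.1, isTopologicallyNilpotent_of_notMem_leftInvertible hH hmin hT.1 hT.2⟩
  refine closure_mono hnil <| mem_closure_diff_leftInvertible <| inter_nonempty_of_tendsto_steps
    (isCompact_leftInvertible hH J) (hH.closure_of_subset Set.sdiff_subset)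
    (fun m => ?_) (subset_closure ⟨h₀, ?_⟩) hF₀ fun n hn => ?_
  · rw [hF]
    exact ⟨hJ, J, hJ, hJJ⟩
  · rintro ⟨-, S, -, hS⟩
    exact hJ₀ (by rw [← hS, mul_zero])
  · obtain ⟨B, hB, hlim⟩ := hstep n hn
    exact ⟨B, (em _).imp id fun hB' => subset_closure ⟨hB, hB'⟩, hlim⟩

end CompactSemigroup

lemma corner_le_corner_of_mem {M : Type*} [Semigroup M] {e f : M}
    (he : e ∈ Subsemigroup.corner f) : Subsemigroup.corner e ≤ Subsemigroup.corner f := by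
  obtain ⟨y, rfl⟩ := he
  rintro _ ⟨x, rfl⟩
  exact ⟨y * f * x * f * y, by simp only [mul_assoc]⟩

lemma sub_mem_corner {R : Type*} [NonUnitalRing R] {e f : R} (hf : IsIdempotentElem f)
    (he : e ∈ Subsemigroup.corner f) : f - e ∈ Subsemigroup.corner f := by
  obtain ⟨hfe, hef⟩ := (Subsemigroup.mem_corner_iff hf).1 he
  exact (Subsemigroup.mem_corner_iff hf).2
    ⟨by rw [mul_sub, hf.eq, hfe], by rw [sub_mul, hf.eq, hef]⟩

lemma sub_mem_corner_one_sub {R : Type*} [Ring R] {e f : R} (hf : IsIdempotentElem f)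
    (he : IsIdempotentElem e) (hef : e ∈ Subsemigroup.corner f) :
    f - e ∈ Subsemigroup.corner (1 - e) := by
  obtain ⟨hfe_eq, hef_eq⟩ := (Subsemigroup.mem_corner_iff hf).1 hef
  refine (Subsemigroup.mem_corner_iff he.one_sub).2 ⟨?_, ?_⟩
  · rw [sub_mul, one_mul, mul_sub, hef_eq, he.eq, sub_self, sub_zero]
  · rw [mul_sub, mul_one, sub_mul, hfe_eq, he.eq, sub_self, sub_zero]

lemma add_pow_succ_of_mul_eq_zero {R : Type*} [Semiring R] {S T : R} (hST : S * T = 0)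
    (hTS : T * S = 0) (k : ℕ) : (S + T) ^ (k + 1) = S ^ (k + 1) + T ^ (k + 1) := by
  induction k with
  | zero => simp only [zero_add, pow_one]
  | succ k ih =>
    have hST' : S ^ (k + 1) * T = 0 := by rw [pow_succ, mul_assoc, hST, mul_zero]
    have hTS' : T ^ (k + 1) * S = 0 := by rw [pow_succ, mul_assoc, hTS, mul_zero]
    rw [pow_succ, ih, add_mul, mul_add, mul_add, hST', hTS', add_zero, zero_add, ← pow_succ,
      ← pow_succ]

lemma isTopologicallyNilpotent_add_of_mul_eq_zero {R : Type*} [Semiring R] [TopologicalSpace R]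
    [ContinuousAdd R] {S T : R} (hS : IsTopologicallyNilpotent S) (hT : IsTopologicallyNilpotent T)
    (hST : S * T = 0) (hTS : T * S = 0) : IsTopologicallyNilpotent (S + T) := by
  refine (tendsto_add_atTop_iff_nat 1).1 ?_
  simp only [add_pow_succ_of_mul_eq_zero hST hTS]
  simpa only [add_zero] using
    ((tendsto_add_atTop_iff_nat 1).2 hS).add ((tendsto_add_atTop_iff_nat 1).2 hT)

lemma rank_lt_rank_of_mem_corner {n F : Type*} [Fintype n] [Field F]
    {J K : Matrix n n F} (hJ : IsIdempotentElem J) (hK : IsIdempotentElem K)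
    (hKJ : K ∈ Subsemigroup.corner J) (hne : K ≠ J) : K.rank < J.rank := by
  classical
  rw [Subsemigroup.mem_corner_iff hJ] at hKJ
  have hle : LinearMap.range K.mulVecLin ≤ LinearMap.range J.mulVecLin := by
    rw [← hKJ.1, mulVecLin_mul]
    exact LinearMap.range_comp_le_range _ _
  refine Submodule.finrank_lt_finrank_of_lt (hle.lt_of_ne fun heq => hne ?_)
  rw [← hKJ.2]
  refine Matrix.ext_of_mulVec_single fun i => ?_
  obtain ⟨y, hy⟩ : J *ᵥ Pi.single i 1 ∈ LinearMap.range K.mulVecLin := heq ▸ ⟨_, rfl⟩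
  rw [← mulVec_mulVec, ← hy, mulVecLin_apply, mulVec_mulVec, hK.eq]

section PushForward

instance {m n R : Type*} [Countable m] [Countable n] [TopologicalSpace R]
    [SecondCountableTopology R] : SecondCountableTopology (Matrix m n R) :=
  inferInstanceAs (SecondCountableTopology (m → n → R))

instance {m n R : Type*} [Finite m] [Finite n] [TopologicalSpace R]
    [TopologicalSpace.PseudoMetrizableSpace R] :
    TopologicalSpace.PseudoMetrizableSpace (Matrix m n R) :=
  inferInstanceAs (TopologicalSpace.PseudoMetrizableSpace (m → n → R))

variable {d : ℕ}

/-- The law of `A x` when `x` has law `μ`, bundled as a probability measure. -/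
noncomputable def mulVecMap (A : Matrix (Fin d) (Fin d) ℝ) (μ : ProbabilityMeasure (Fin d → ℝ)) :
    ProbabilityMeasure (Fin d → ℝ) :=
  μ.map (f := A.mulVec) (Continuous.matrix_mulVec continuous_const continuous_id).aemeasurable

variable {A B K S T : Matrix (Fin d) (Fin d) ℝ} {μ ν : ProbabilityMeasure (Fin d → ℝ)}

lemma measurable_mulVec (A : Matrix (Fin d) (Fin d) ℝ) : Measurable A.mulVec :=
  (by fun_prop : Continuous fun x => A *ᵥ x).measurable

lemma coe_mulVecMap (A : Matrix (Fin d) (Fin d) ℝ) (μ : ProbabilityMeasure (Fin d → ℝ)) :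
    (mulVecMap A μ : Measure (Fin d → ℝ)) = (μ : Measure (Fin d → ℝ)).map A.mulVec :=
  rfl

lemma continuous_mulVecMap :
    Continuous fun p : Matrix (Fin d) (Fin d) ℝ × ProbabilityMeasure (Fin d → ℝ) =>
      mulVecMap p.1 p.2 :=
  continuous_map_uncurry (f := fun (A : Matrix (Fin d) (Fin d) ℝ) x => A *ᵥ x)
    (by simp only [Function.uncurry_def]; fun_prop)

lemma mulVecMap_mul (A B : Matrix (Fin d) (Fin d) ℝ) (μ : ProbabilityMeasure (Fin d → ℝ)) :
    mulVecMap (A * B) μ = mulVecMap A (mulVecMap B μ) := Subtype.ext <| by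
  change Measure.map (A * B).mulVec μ = (Measure.map B.mulVec μ).map A.mulVec
  rw [Measure.map_map (measurable_mulVec A) (measurable_mulVec B)]
  simp only [Function.comp_def, mulVec_mulVec]

lemma mulVecMap_zero (μ : ProbabilityMeasure (Fin d → ℝ)) :
    mulVecMap 0 μ = diracProba 0 := Subtype.ext <| by
  change Measure.map (0 : Matrix (Fin d) (Fin d) ℝ).mulVec μ = Measure.dirac 0
  simp only [funext zero_mulVec, Measure.map_const, measure_univ, one_smul]

lemma mulVecMap_probConv (A : Matrix (Fin d) (Fin d) ℝ) (μ ν : ProbabilityMeasure (Fin d → ℝ)) :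
    mulVecMap A (probConv μ ν) = probConv (mulVecMap A μ) (mulVecMap A ν) :=
  Subtype.ext <| Measure.map_conv_addMonoidHom A.mulVecLin.toAddMonoidHom (measurable_mulVec A)

end PushForward

section Semigroup

variable {d : ℕ} {A B K S T : Matrix (Fin d) (Fin d) ℝ} {μ ν : ProbabilityMeasure (Fin d → ℝ)}

lemma mem_UrbanikD_iff :
    A ∈ UrbanikD (μ : Measure (Fin d → ℝ)) ↔ ∃ ν, μ = probConv (mulVecMap A μ) ν :=
  ⟨fun ⟨ν, hν, h⟩ => ⟨⟨ν, hν⟩, Subtype.ext h⟩,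
    fun ⟨ν, h⟩ => ⟨ν, inferInstance, congrArg Subtype.val h⟩⟩

lemma zero_mem_UrbanikD : 0 ∈ UrbanikD (μ : Measure (Fin d → ℝ)) :=
  mem_UrbanikD_iff.2 ⟨μ, by rw [mulVecMap_zero, diracProba_zero_probConv]⟩

lemma mul_mem_UrbanikD (hA : A ∈ UrbanikD (μ : Measure (Fin d → ℝ)))
    (hB : B ∈ UrbanikD (μ : Measure (Fin d → ℝ))) :
    A * B ∈ UrbanikD (μ : Measure (Fin d → ℝ)) := by
  obtain ⟨ν, hν⟩ := mem_UrbanikD_iff.1 hA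
  obtain ⟨ξ, hξ⟩ := mem_UrbanikD_iff.1 hB
  refine mem_UrbanikD_iff.2 ⟨probConv (mulVecMap A ξ) ν, ?_⟩
  calc μ = probConv (mulVecMap A (probConv (mulVecMap B μ) ξ)) ν := by rw [← hξ, ← hν]
    _ = probConv (mulVecMap (A * B) μ) (probConv (mulVecMap A ξ) ν) := by
        rw [mulVecMap_probConv, mulVecMap_mul, probConv_assoc]

lemma mulVecMap_one_sub_eq_self (h : mulVecMap K ν = diracProba 0) :
    mulVecMap (1 - K) ν = ν := Subtype.ext <| by
  have hK : ∀ᵐ x ∂(ν : Measure (Fin d → ℝ)), K *ᵥ x = 0 := by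
    refine ae_of_ae_map (p := (· = 0)) (measurable_mulVec K).aemeasurable ?_
    rw [← coe_mulVecMap, h, diracProba, ProbabilityMeasure.coe_mk, ae_dirac_eq]
    exact eventually_pure.2 rfl
  change Measure.map (1 - K).mulVec ν = ν
  conv_rhs => rw [← Measure.map_id (μ := (ν : Measure (Fin d → ℝ)))]
  refine Measure.map_congr (hK.mono fun x hx => ?_)
  rw [sub_mulVec, hx, one_mulVec, sub_zero, id]

lemma eq_probConv_of_isIdempotentElem (hK : IsIdempotentElem K)
    (hKD : K ∈ UrbanikD (μ : Measure (Fin d → ℝ))) :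
    μ = probConv (mulVecMap K μ) (mulVecMap (1 - K) μ) := by
  obtain ⟨ν, hν⟩ := mem_UrbanikD_iff.1 hKD
  have hKμ : probConv (mulVecMap K μ) (mulVecMap K ν) = mulVecMap K μ := by
    conv_rhs => rw [hν, mulVecMap_probConv, ← mulVecMap_mul, hK]
  have hKν : mulVecMap K ν = diracProba 0 :=
    Subtype.ext <| eq_dirac_zero_of_conv_eq_self (κ := (mulVecMap K μ : Measure (Fin d → ℝ)))
      (ν := (mulVecMap K ν : Measure (Fin d → ℝ))) (congrArg Subtype.val hKμ)
  have hν' : mulVecMap (1 - K) μ = ν := by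
    conv_lhs => rw [hν, mulVecMap_probConv, ← mulVecMap_mul, sub_mul, one_mul, hK.eq, sub_self,
      mulVecMap_zero, diracProba_zero_probConv, mulVecMap_one_sub_eq_self hKν]
  rw [hν', ← hν]

lemma one_sub_mem_UrbanikD (hK : IsIdempotentElem K)
    (hKD : K ∈ UrbanikD (μ : Measure (Fin d → ℝ))) :
    1 - K ∈ UrbanikD (μ : Measure (Fin d → ℝ)) :=
  mem_UrbanikD_iff.2 ⟨mulVecMap K μ, by
    rw [probConv_comm]; exact eq_probConv_of_isIdempotentElem hK hKD⟩

lemma mulVecMap_eq_probConv_of_mul_eq_self (hA : A ∈ UrbanikD (μ : Measure (Fin d → ℝ)))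
    (hKA : K * A = A) : ∃ ν, mulVecMap K μ = probConv (mulVecMap A μ) ν := by
  obtain ⟨ν, hν⟩ := mem_UrbanikD_iff.1 hA
  refine ⟨mulVecMap K ν, ?_⟩
  conv_lhs => rw [hν, mulVecMap_probConv, ← mulVecMap_mul, hKA]

lemma add_mem_UrbanikD (hK : IsIdempotentElem K) (hKD : K ∈ UrbanikD (μ : Measure (Fin d → ℝ)))
    (hS : S ∈ UrbanikD (μ : Measure (Fin d → ℝ))) (hSK : S ∈ Subsemigroup.corner K)
    (hT : T ∈ UrbanikD (μ : Measure (Fin d → ℝ))) (hTK : T ∈ Subsemigroup.corner (1 - K)) :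
    S + T ∈ UrbanikD (μ : Measure (Fin d → ℝ)) := by
  rw [Subsemigroup.mem_corner_iff hK] at hSK
  rw [Subsemigroup.mem_corner_iff hK.one_sub] at hTK
  have hμ := eq_probConv_of_isIdempotentElem hK hKD
  have hTK₀ : T * K = 0 := by rw [← hTK.2, mul_assoc, sub_mul, one_mul, hK.eq, sub_self, mul_zero]
  have hSK₀ : S * (1 - K) = 0 := by rw [mul_sub, mul_one, hSK.2, sub_self]
  have hsum : mulVecMap (S + T) μ = probConv (mulVecMap S μ) (mulVecMap T μ) := by
    conv_lhs => rw [hμ, mulVecMap_probConv, ← mulVecMap_mul, ← mulVecMap_mul, add_mul, add_mul,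
      hSK.2, hTK₀, hSK₀, hTK.2, add_zero, zero_add]
  obtain ⟨ν, hν⟩ := mulVecMap_eq_probConv_of_mul_eq_self hS hSK.1
  obtain ⟨ξ, hξ⟩ := mulVecMap_eq_probConv_of_mul_eq_self hT hTK.1
  refine mem_UrbanikD_iff.2 ⟨probConv ν ξ, ?_⟩
  calc μ = probConv (probConv (mulVecMap S μ) ν) (probConv (mulVecMap T μ) ξ) := by
        rw [← hν, ← hξ, ← hμ]
    _ = probConv (mulVecMap (S + T) μ) (probConv ν ξ) := by rw [hsum, probConv_probConv_comm]

end Semigroup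

section Compactness

open scoped Matrix.Norms.Operator

variable {d : ℕ} {μ : ProbabilityMeasure (Fin d → ℝ)} {κ ν : ℕ → ProbabilityMeasure (Fin d → ℝ)}
  {C : ℕ → Matrix (Fin d) (Fin d) ℝ}

lemma IsFull.eq_zero_of_ae_mulVec_eq {μ : Measure (Fin d → ℝ)} [IsProbabilityMeasure μ]
    {T : Matrix (Fin d) (Fin d) ℝ} {c : Fin d → ℝ} (hμ : IsFull μ)
    (h : ∀ᵐ x ∂μ, T *ᵥ x = c) : T = 0 := by
  by_contra hT
  obtain ⟨v, hv⟩ := h.exists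
  have hker : T.mulVecLin.ker ≠ ⊤ := by
    rw [Ne, LinearMap.ker_eq_top]
    exact fun h₀ => hT (toLin'.map_eq_zero_iff.1 h₀)
  refine (hμ v _ hker).not_ge ?_
  calc 1 = μ Set.univ := measure_univ.symm
    _ ≤ μ {x | x - v ∈ T.mulVecLin.ker} := measure_mono_ae <| h.mono fun x hx _ => by
        change T *ᵥ (x - v) = 0
        rw [mulVec_sub, hx, hv, sub_self]

lemma IsFull.not_tendsto_diracProba_zero (hμ : IsFull (μ : Measure (Fin d → ℝ)))
    (hκ : Tendsto κ atTop (𝓝 μ)) (hC : ∀ᶠ k in atTop, ‖C k‖ = 1) :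
    ¬Tendsto (fun k => probConv (mulVecMap (C k) (κ k)) (ν k)) atTop (𝓝 (diracProba 0)) := by
  intro h
  have : ProperSpace (Matrix (Fin d) (Fin d) ℝ) := FiniteDimensional.proper ℝ _
  obtain ⟨B, -, φ, hφ, hB⟩ := tendsto_subseq_of_frequently_bounded
    (Metric.isBounded_sphere (x := (0 : Matrix (Fin d) (Fin d) ℝ)) (r := 1))
    (hC.mono fun k hk => mem_sphere_zero_iff_norm.2 hk).frequently
  have hB_norm : ‖B‖ = 1 := tendsto_nhds_unique hB.norm <|
    tendsto_const_nhds.congr' ((hφ.tendsto_atTop.eventually hC).mono fun k hk => hk.symm)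
  have hpush : Tendsto (fun k => mulVecMap (C (φ k)) (κ (φ k))) atTop (𝓝 (mulVecMap B μ)) :=
    (continuous_mulVecMap.tendsto (B, μ)).comp (hB.prodMk_nhds (hκ.comp hφ.tendsto_atTop))
  obtain ⟨ξ, hξ⟩ := exists_eq_probConv_of_tendsto hpush (h.comp hφ.tendsto_atTop)
  rw [probConv_comm] at hξ
  obtain ⟨c, hc⟩ := exists_ae_eq_const_of_conv_eq_dirac (κ := (ξ : Measure (Fin d → ℝ)))
    (ν := (mulVecMap B μ : Measure (Fin d → ℝ))) (congrArg Subtype.val hξ.symm)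
  have hB_zero : B = 0 :=
    hμ.eq_zero_of_ae_mulVec_eq (ae_of_ae_map (measurable_mulVec B).aemeasurable hc)
  rw [hB_zero, norm_zero] at hB_norm
  exact zero_ne_one hB_norm

lemma IsFull.not_tendsto_norm_atTop (hμ : IsFull (μ : Measure (Fin d → ℝ)))
    (hκ : Tendsto κ atTop (𝓝 μ))
    (h : Tendsto (fun k => probConv (mulVecMap (C k) (κ k)) (ν k)) atTop (𝓝 μ)) :
    ¬Tendsto (fun k => ‖C k‖) atTop atTop := by
  intro hC
  let r (k : ℕ) : Matrix (Fin d) (Fin d) ℝ := ‖C k‖⁻¹ • 1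
  have hr : Tendsto r atTop (𝓝 0) := by
    simpa only [zero_smul, Pi.inv_apply] using
      hC.inv_tendsto_atTop.smul_const (1 : Matrix (Fin d) (Fin d) ℝ)
  have hnorm : ∀ᶠ k in atTop, ‖r k * C k‖ = 1 := by
    filter_upwards [hC.eventually_gt_atTop 0] with k hk
    rw [smul_mul_assoc, one_mul, norm_smul, norm_inv, norm_norm, inv_mul_cancel₀ hk.ne']
  refine hμ.not_tendsto_diracProba_zero (ν := fun k => mulVecMap (r k) (ν k)) hκ hnorm ?_
  have hlim := (continuous_mulVecMap.tendsto (0, μ)).comp (hr.prodMk_nhds h)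
  simpa only [Function.comp_def, mulVecMap_zero, mulVecMap_probConv, ← mulVecMap_mul] using hlim

lemma IsFull.exists_subseq_tendsto_mem_UrbanikD (hμ : IsFull (μ : Measure (Fin d → ℝ)))
    (hκ : Tendsto κ atTop (𝓝 μ))
    (h : Tendsto (fun k => probConv (mulVecMap (C k) (κ k)) (ν k)) atTop (𝓝 μ)) :
    ∃ B ∈ UrbanikD (μ : Measure (Fin d → ℝ)), ∃ φ : ℕ → ℕ,
      StrictMono φ ∧ Tendsto (C ∘ φ) atTop (𝓝 B) := by
  have : ProperSpace (Matrix (Fin d) (Fin d) ℝ) := FiniteDimensional.proper ℝ _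
  obtain ⟨r, hr⟩ : ∃ r, ∃ᶠ k in atTop, ‖C k‖ ≤ r := by
    have hC := hμ.not_tendsto_norm_atTop hκ h
    simp only [tendsto_atTop, not_forall, not_eventually, not_le] at hC
    exact hC.imp fun r hr => hr.mono fun k hk => hk.le
  obtain ⟨B, -, φ, hφ, hB⟩ := tendsto_subseq_of_frequently_bounded
    (Metric.isBounded_closedBall (x := (0 : Matrix (Fin d) (Fin d) ℝ)) (r := r))
    (hr.mono fun k hk => mem_closedBall_zero_iff.2 hk)
  have hpush : Tendsto (fun k => mulVecMap (C (φ k)) (κ (φ k))) atTop (𝓝 (mulVecMap B μ)) :=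
    (continuous_mulVecMap.tendsto (B, μ)).comp (hB.prodMk_nhds (hκ.comp hφ.tendsto_atTop))
  exact ⟨B, mem_UrbanikD_iff.2 (exists_eq_probConv_of_tendsto hpush (h.comp hφ.tendsto_atTop)),
    φ, hφ, hB⟩

lemma IsFull.isCompact_UrbanikD (hμ : IsFull (μ : Measure (Fin d → ℝ))) :
    IsCompact (UrbanikD (μ : Measure (Fin d → ℝ))) := by
  refine IsSeqCompact.isCompact fun C hC => ?_
  choose ν hν using fun k => mem_UrbanikD_iff.1 (hC k)
  exact hμ.exists_subseq_tendsto_mem_UrbanikD (κ := fun _ => μ) (ν := ν) tendsto_const_nhds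
    (by simpa only [← hν] using tendsto_const_nhds)

end Compactness

lemma inv_mul_eq_one_of_isUnit {n R : Type*} [Fintype n] [DecidableEq n] [CommRing R]
    {M : Matrix n n R} (h : IsUnit M) : M⁻¹ * M = 1 :=
  nonsing_inv_mul M ((isUnit_iff_isUnit_det M).1 h)

lemma partialSum_eq_add_sum_Ioc_add_sum_Ioc {d : ℕ} {Ω : Type*} (X : ℕ → Ω → Fin d → ℝ)
    {m n : ℕ} (h : m ≤ n) (i : ℕ) (ω : Ω) :
    partialSum X n ω = partialSum X m ω + ∑ j ∈ Finset.Ioc m (min (m + i) n), X j ω +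
      ∑ j ∈ Finset.Ioc (m + i) n, X j ω := by
  have hIcc (l : ℕ) : Finset.Icc 1 l = Finset.Ioc 0 l := by
    ext j; simp only [Finset.mem_Icc, Finset.mem_Ioc]; omega
  have hIoc : Finset.Ioc (m + i) n = Finset.Ioc (min (m + i) n) n := by
    ext j; simp only [Finset.mem_Ioc]; omega
  rw [partialSum, partialSum, hIcc, hIcc, hIoc,
    Finset.sum_Ioc_consecutive _ (Nat.zero_le _) (by omega),
    Finset.sum_Ioc_consecutive _ (Nat.zero_le _) (by omega)]

lemma mulVec_partialSum_add_sub_eq_gap {d : ℕ} {Ω : Type*} {X : ℕ → Ω → Fin d → ℝ}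
    {A : ℕ → Matrix (Fin d) (Fin d) ℝ} {b : ℕ → Fin d → ℝ} {m n : ℕ} (hA : IsUnit (A m))
    (hmn : m ≤ n) (i : ℕ) (ω : Ω) :
    A n *ᵥ partialSum X n ω + b n - ((A n * (A m)⁻¹) *ᵥ (A m *ᵥ partialSum X m ω + b m) +
        (A n *ᵥ ∑ j ∈ Finset.Ioc (m + i) n, X j ω + (b n - (A n * (A m)⁻¹) *ᵥ b m))) =
      A n *ᵥ ∑ j ∈ Finset.Ioc m (min (m + i) n), X j ω := by
  rw [partialSum_eq_add_sum_Ioc_add_sum_Ioc X hmn i, mulVec_add, mulVec_add, mulVec_add,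
    mulVec_mulVec, mul_assoc, inv_mul_eq_one_of_isUnit hA, mul_one]
  abel

lemma measurable_mulVec_sum_add {d : ℕ} {Ω : Type*} {_ : MeasurableSpace Ω}
    {X : ℕ → Ω → Fin d → ℝ} {s : Finset ℕ} (hX : ∀ j ∈ s, Measurable (X j))
    (M : Matrix (Fin d) (Fin d) ℝ) (c : Fin d → ℝ) :
    Measurable fun ω => M *ᵥ ∑ j ∈ s, X j ω + c :=
  ((measurable_mulVec M).comp (Finset.measurable_fun_sum s hX)).add_const c

lemma measurable_iSup_comap {ι Ω E : Type*} [MeasurableSpace E] {X : ι → Ω → E}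
    {s : Set ι} {j : ι} (hj : j ∈ s) :
    Measurable[⨆ k ∈ s, MeasurableSpace.comap (X k) inferInstance] (X j) :=
  (comap_measurable (X j)).mono
    (le_iSup₂ (f := fun k (_ : k ∈ s) => MeasurableSpace.comap (X k) inferInstance) j hj) le_rfl

lemma measurable_mulVec_sum_add_iSup_comap {d : ℕ} {Ω : Type*} {X : ℕ → Ω → Fin d → ℝ}
    {s : Set ℕ} {t : Finset ℕ} (h : ↑t ⊆ s) (M : Matrix (Fin d) (Fin d) ℝ) (c : Fin d → ℝ) :
    Measurable[⨆ k ∈ s, MeasurableSpace.comap (X k) inferInstance]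
      fun ω => M *ᵥ ∑ j ∈ t, X j ω + c :=
  measurable_mulVec_sum_add (fun _ hj => measurable_iSup_comap (h hj)) M c

section NormalizedSums

open scoped Matrix.Norms.Operator

variable {d : ℕ} {Ω : Type*} [MeasurableSpace Ω] {X : ℕ → Ω → Fin d → ℝ}

lemma weakLim_iff_tendsto {κ : ℕ → ProbabilityMeasure (Fin d → ℝ)}
    {μ : ProbabilityMeasure (Fin d → ℝ)} :
    WeakLim (fun n => (κ n : Measure (Fin d → ℝ))) μ ↔ Tendsto κ atTop (𝓝 μ) :=
  ProbabilityMeasure.tendsto_iff_forall_integral_tendsto.symm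

lemma measurable_mulVec_partialSum_add (hX : ∀ j, Measurable (X j))
    (M : Matrix (Fin d) (Fin d) ℝ) (c : Fin d → ℝ) (n : ℕ) :
    Measurable fun ω => M *ᵥ partialSum X n ω + c :=
  measurable_mulVec_sum_add (fun j _ => hX j) M c

/-- The law of the normalized partial sum `A_n S_n + b_n`, bundled as a probability measure. -/
noncomputable def normalizedSumLaw (P : ProbabilityMeasure Ω) (hX : ∀ j, Measurable (X j))
    (A : ℕ → Matrix (Fin d) (Fin d) ℝ) (b : ℕ → Fin d → ℝ) (n : ℕ) :
    ProbabilityMeasure (Fin d → ℝ) :=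
  P.map (measurable_mulVec_partialSum_add hX (A n) (b n) n).aemeasurable

variable {P : ProbabilityMeasure Ω} {hX : ∀ j, Measurable (X j)}
  {A : ℕ → Matrix (Fin d) (Fin d) ℝ} {b : ℕ → Fin d → ℝ} {μ : ProbabilityMeasure (Fin d → ℝ)}

lemma Infinitesimal.tendstoInMeasure_zero {P : Measure Ω} [IsFiniteMeasure P]
    (hinf : Infinitesimal P A X) {j : ℕ} (hj : 1 ≤ j) :
    TendstoInMeasure P (fun n ω => A n *ᵥ X j ω) atTop 0 := by
  refine tendstoInMeasure_iff_measureReal_norm.2 fun ε hε => ?_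
  refine Metric.tendsto_atTop.2 fun δ hδ => ?_
  obtain ⟨N, hN⟩ := hinf ε hε δ hδ
  refine ⟨max N j, fun n hn => ?_⟩
  rw [Real.dist_0_eq_abs, abs_of_nonneg measureReal_nonneg]
  simpa only [Pi.zero_apply, sub_zero, Measure.real] using
    hN n (le_of_max_le_left hn) j hj (le_of_max_le_right hn)

lemma Infinitesimal.ae_mulVec_eq_zero_of_tendsto_smul {P : Measure Ω} [IsFiniteMeasure P]
    (hinf : Infinitesimal P A X) {φ : ℕ → ℕ} (hφ : Tendsto φ atTop atTop) {c : ℕ → ℝ}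
    (hc : IsBoundedUnder (· ≤ ·) atTop fun k => ‖c k‖) {D : Matrix (Fin d) (Fin d) ℝ}
    (hD : Tendsto (fun k => c k • A (φ k)) atTop (𝓝 D)) {j : ℕ} (hj : 1 ≤ j) :
    ∀ᵐ ω ∂P, D *ᵥ X j ω = 0 := by
  obtain ⟨ψ, hψ, hlim⟩ :=
    ((hinf.tendstoInMeasure_zero hj).comp hφ).exists_seq_tendsto_ae
  filter_upwards [hlim] with ω hω
  have hD_lim : Tendsto (fun k => (c (ψ k) • A (φ (ψ k))) *ᵥ X j ω) atTop (𝓝 (D *ᵥ X j ω)) :=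
    ((by fun_prop : Continuous fun M : Matrix (Fin d) (Fin d) ℝ => M *ᵥ X j ω).tendsto D).comp
      (hD.comp hψ.tendsto_atTop)
  have hzero : Tendsto (fun k => c (ψ k) • (A (φ (ψ k)) *ᵥ X j ω)) atTop (𝓝 0) :=
    (hψ.tendsto_atTop.isBoundedUnder_comp hc).smul_tendsto_zero hω
  simp only [smul_mulVec] at hD_lim
  exact tendsto_nhds_unique hD_lim hzero

lemma mulVecMap_normalizedSumLaw_eq_diracProba (hA : ∀ n, IsUnit (A n))
    {D : Matrix (Fin d) (Fin d) ℝ} (hD : ∀ j, 1 ≤ j → ∀ᵐ ω ∂(P : Measure Ω), D *ᵥ X j ω = 0)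
    (n : ℕ) :
    mulVecMap (D * (A n)⁻¹) (normalizedSumLaw P hX A b n) =
      diracProba ((D * (A n)⁻¹) *ᵥ b n) := Subtype.ext <| by
  have hsum : ∀ᵐ ω ∂(P : Measure Ω), D *ᵥ partialSum X n ω = 0 := by
    have hall : ∀ᵐ ω ∂(P : Measure Ω), ∀ j ∈ Finset.Icc 1 n, D *ᵥ X j ω = 0 :=
      (Finset.eventually_all _).2 fun j hj => hD j (Finset.mem_Icc.1 hj).1
    filter_upwards [hall] with ω hω
    rw [partialSum, mulVec_sum, Finset.sum_eq_zero hω]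
  change ((P : Measure Ω).map _).map (D * (A n)⁻¹).mulVec = Measure.dirac _
  rw [Measure.map_map (measurable_mulVec _) (measurable_mulVec_partialSum_add hX _ _ n),
    Measure.map_congr (g := fun _ => (D * (A n)⁻¹) *ᵥ b n), Measure.map_const, measure_univ,
    one_smul]
  filter_upwards [hsum] with ω hω
  rw [Function.comp_apply, mulVec_add, mulVec_mulVec, mul_assoc, inv_mul_eq_one_of_isUnit (hA n),
    mul_one, hω, zero_add]

lemma eq_zero_of_ae_mulVec_eq_zero (hA : ∀ n, IsUnit (A n))
    (hμ : IsFull (μ : Measure (Fin d → ℝ)))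
    (hconv : Tendsto (normalizedSumLaw P hX A b) atTop (𝓝 μ)) {D : Matrix (Fin d) (Fin d) ℝ}
    (hD : ∀ j, 1 ≤ j → ∀ᵐ ω ∂(P : Measure Ω), D *ᵥ X j ω = 0) : D = 0 := by
  by_contra hD₀
  let c (n : ℕ) : ℝ := ‖D * (A n)⁻¹‖⁻¹
  have hne (n : ℕ) : D * (A n)⁻¹ ≠ 0 := fun h => hD₀ <| by
    rw [← mul_one D, ← inv_mul_eq_one_of_isUnit (hA n), ← mul_assoc, h, zero_mul]
  have hnorm (n : ℕ) : ‖(c n • D) * (A n)⁻¹‖ = 1 := by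
    rw [smul_mul_assoc, norm_smul, norm_inv, norm_norm,
      inv_mul_cancel₀ (norm_ne_zero_iff.2 (hne n))]
  have hcD (n j : ℕ) (hj : 1 ≤ j) : ∀ᵐ ω ∂(P : Measure Ω), (c n • D) *ᵥ X j ω = 0 :=
    (hD j hj).mono fun ω hω => by rw [smul_mulVec, hω, smul_zero]
  refine hμ.not_tendsto_diracProba_zero
    (ν := fun n => diracProba (-(((c n • D) * (A n)⁻¹) *ᵥ b n))) hconv (.of_forall hnorm)
    (tendsto_const_nhds.congr fun n => ?_)
  rw [mulVecMap_normalizedSumLaw_eq_diracProba hA (hcD n), probConv_diracProba, add_neg_cancel]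

lemma tendsto_zero_of_tendsto_normalizedSumLaw (hA : ∀ n, IsUnit (A n))
    (hμ : IsFull (μ : Measure (Fin d → ℝ))) (hinf : Infinitesimal (P : Measure Ω) A X)
    (hconv : Tendsto (normalizedSumLaw P hX A b) atTop (𝓝 μ)) :
    Tendsto A atTop (𝓝 0) := by
  refine tendsto_zero_iff_norm_tendsto_zero.2 ?_
  by_contra hne
  obtain ⟨ε, hε, hfreq⟩ : ∃ ε > 0, ∃ᶠ n in atTop, ε ≤ ‖A n‖ := by
    by_contra! hsmall
    exact hne <| Metric.tendsto_nhds.2 fun ε hε => (hsmall ε hε).mono fun n hn => by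
      rwa [dist_zero_right, norm_norm]
  obtain ⟨φ, hφ, hεA⟩ := extraction_of_frequently_atTop hfreq
  have hpos (k : ℕ) : 0 < ‖A (φ k)‖ := hε.trans_le (hεA k)
  have : ProperSpace (Matrix (Fin d) (Fin d) ℝ) := FiniteDimensional.proper ℝ _
  obtain ⟨D, hD, ψ, hψ, hlim⟩ := (isCompact_sphere (0 : Matrix (Fin d) (Fin d) ℝ) 1).tendsto_subseq
    (x := fun k => ‖A (φ k)‖⁻¹ • A (φ k)) fun k => by
      rw [mem_sphere_zero_iff_norm, norm_smul, norm_inv, norm_norm, inv_mul_cancel₀ (hpos k).ne']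
  have hbdd : IsBoundedUnder (· ≤ ·) atTop fun k => ‖‖A (φ (ψ k))‖⁻¹‖ :=
    isBoundedUnder_of ⟨ε⁻¹, fun k => by
      rw [norm_inv, norm_norm]; exact inv_anti₀ hε (hεA _)⟩
  have hD₀ : D = 0 := eq_zero_of_ae_mulVec_eq_zero hA hμ hconv fun j hj =>
    hinf.ae_mulVec_eq_zero_of_tendsto_smul (hφ.comp hψ).tendsto_atTop hbdd hlim hj
  rw [mem_sphere_zero_iff_norm, hD₀, norm_zero] at hD
  exact zero_ne_one hD

lemma tendsto_map_of_tendstoInMeasure_sub_zero {E : Type*} [NormedAddCommGroup E]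
    [SecondCountableTopology E] [MeasurableSpace E] [BorelSpace E] {μ : ProbabilityMeasure E}
    {Y Z : ℕ → Ω → E} (hY : ∀ k, AEMeasurable (Y k) P) (hZ : ∀ k, AEMeasurable (Z k) P)
    (h : Tendsto (fun k => P.map (hY k)) atTop (𝓝 μ))
    (hYZ : TendstoInMeasure (P : Measure Ω) (fun k => Y k - Z k) atTop 0) :
    Tendsto (fun k => P.map (hZ k)) atTop (𝓝 μ) := by
  have hmap : (⟨(μ : Measure E).map id, Measure.isProbabilityMeasure_map aemeasurable_id⟩ :
      ProbabilityMeasure E) = μ := Subtype.ext Measure.map_id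
  have hdist : TendstoInDistribution Y atTop (id : E → E) (fun _ => (P : Measure Ω))
      (μ : Measure E) :=
    ⟨hY, aemeasurable_id, by rw [hmap]; exact h⟩
  have hZY : TendstoInMeasure (P : Measure Ω) (fun k => Z k - Y k) atTop 0 := by
    refine tendstoInMeasure_iff_norm.2 fun ε hε => ?_
    simpa only [Pi.sub_apply, Pi.zero_apply, sub_zero, norm_sub_rev] using
      tendstoInMeasure_iff_norm.1 hYZ ε hε
  have hlim := (tendstoInDistribution_of_tendstoInMeasure_sub _ _ hdist hZY hZ).tendsto
  rw [hmap] at hlim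
  exact hlim

lemma tendstoInMeasure_zero_of_measureReal_lt {E : Type*} [NormedAddCommGroup E] {P : Measure Ω}
    [IsFiniteMeasure P] {R : ℕ → Ω → E} {ε : ℕ → ℝ} (hε : Tendsto ε atTop (𝓝 0))
    (h : ∀ k, P.real {ω | ε k ≤ ‖R k ω‖} < ε k) : TendstoInMeasure P R atTop 0 := by
  refine tendstoInMeasure_iff_measureReal_norm.2 fun δ hδ => ?_
  refine squeeze_zero' (.of_forall fun _ => measureReal_nonneg) ?_ hε
  filter_upwards [hε.eventually_le_const hδ] with k hk
  refine (measureReal_mono fun ω hω => ?_).trans (h k).le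
  rw [Set.mem_ofPred_eq, Pi.zero_apply, sub_zero] at hω
  exact hk.trans hω

lemma Infinitesimal.eventually_measureReal_norm_mulVec_sum_lt {P : Measure Ω} [IsFiniteMeasure P]
    (hinf : Infinitesimal P A X) (i : ℕ) {δ : ℝ} (hδ : 0 < δ) :
    ∀ᶠ n in atTop, ∀ s ⊆ Finset.Icc 1 n, s.card ≤ i →
      P.real {ω | δ ≤ ‖A n *ᵥ ∑ j ∈ s, X j ω‖} < δ := by
  let η := δ / (i + 1)
  have hη : 0 < η := by positivity
  have hiη : i * η < δ := by
    rw [mul_div_assoc', div_lt_iff₀ (by positivity)]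
    linarith
  obtain ⟨N, hN⟩ := hinf η hη η hη
  filter_upwards [eventually_ge_atTop N] with n hn s hs hcard
  have hcard_mul : s.card • η ≤ i * η := by
    rw [nsmul_eq_mul]
    gcongr
  have hcover : {ω | δ ≤ ‖A n *ᵥ ∑ j ∈ s, X j ω‖} ⊆ ⋃ j ∈ s, {ω | η ≤ ‖A n *ᵥ X j ω‖} := by
    intro ω hω
    by_contra hsmall
    simp only [Set.mem_iUnion, Set.mem_ofPred_eq, not_exists, not_le] at hsmall
    have hω' : δ ≤ ‖A n *ᵥ ∑ j ∈ s, X j ω‖ := hω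
    refine hω'.not_gt ?_
    calc ‖A n *ᵥ ∑ j ∈ s, X j ω‖ ≤ ∑ j ∈ s, ‖A n *ᵥ X j ω‖ := by
          rw [mulVec_sum]; exact norm_sum_le _ _
      _ ≤ s.card • η := Finset.sum_le_card_nsmul _ _ _ fun j hj => (hsmall j hj).le
      _ < δ := hcard_mul.trans_lt hiη
  calc P.real {ω | δ ≤ ‖A n *ᵥ ∑ j ∈ s, X j ω‖}
      ≤ P.real (⋃ j ∈ s, {ω | η ≤ ‖A n *ᵥ X j ω‖}) := measureReal_mono hcover (measure_ne_top _ _)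
    _ ≤ ∑ j ∈ s, P.real {ω | η ≤ ‖A n *ᵥ X j ω‖} := measureReal_biUnion_finset_le _ _
    _ ≤ s.card • η := Finset.sum_le_card_nsmul _ _ _ fun j hj =>
        (hN n hn j (Finset.mem_Icc.1 (hs hj)).1 (Finset.mem_Icc.1 (hs hj)).2).le
    _ < δ := hcard_mul.trans_lt hiη

lemma Infinitesimal.exists_subseq_tendstoInMeasure_gap {P : Measure Ω} [IsFiniteMeasure P]
    (hinf : Infinitesimal P A X) (m : ℕ → ℕ) {n : ℕ → ℕ} (hn : Tendsto n atTop atTop) :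
    ∃ φ : ℕ → ℕ, StrictMono φ ∧ TendstoInMeasure P (fun i ω => A (n (φ i)) *ᵥ
      ∑ j ∈ Finset.Ioc (m (φ i)) (min (m (φ i) + i) (n (φ i))), X j ω) atTop 0 := by
  have hgap (i : ℕ) : ∀ᶠ k in atTop, P.real {ω | 1 / ((i : ℝ) + 1) ≤ ‖A (n k) *ᵥ
      ∑ j ∈ Finset.Ioc (m k) (min (m k + i) (n k)), X j ω‖} < 1 / ((i : ℝ) + 1) := by
    filter_upwards [hn.eventually (hinf.eventually_measureReal_norm_mulVec_sum_lt i
      (δ := 1 / ((i : ℝ) + 1)) (by positivity))] with k hk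
    refine hk _ (fun j hj => ?_) (by rw [Nat.card_Ioc]; omega)
    rw [Finset.mem_Ioc] at hj
    rw [Finset.mem_Icc]
    omega
  obtain ⟨φ, hφ, hφ_gap⟩ := extraction_forall_of_eventually hgap
  exact ⟨φ, hφ, tendstoInMeasure_zero_of_measureReal_lt tendsto_one_div_add_atTop_nhds_zero_nat
    hφ_gap⟩

lemma alphaSig_le_alphaMix_s9 {P : Measure Ω} [IsProbabilityMeasure P] {m : ℕ} (hm : 1 ≤ m) (i : ℕ) :
    alphaSig P (⨆ k ∈ Set.Icc 1 m, MeasurableSpace.comap (X k) inferInstance)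
      (⨆ k ∈ Set.Ici (m + i), MeasurableSpace.comap (X k) inferInstance) ≤ alphaMix P X i := by
  refine le_ciSup (ι := {j : ℕ // 1 ≤ j}) (f := fun j => alphaSig P
    (⨆ k ∈ Set.Icc 1 (j : ℕ), MeasurableSpace.comap (X k) inferInstance)
    (⨆ k ∈ Set.Ici ((j : ℕ) + i), MeasurableSpace.comap (X k) inferInstance)) ⟨1, ?_⟩ ⟨m, hm⟩
  rintro _ ⟨j, rfl⟩
  refine Real.sSup_le ?_ zero_le_one
  rintro _ ⟨S, T, -, -, rfl⟩
  exact abs_measureReal_inter_sub_le_one (P := P) S T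

lemma StronglyMixing.tendsto_alphaSig {P : Measure Ω} [IsProbabilityMeasure P]
    (hmix : StronglyMixing P X) {m : ℕ → ℕ} (hm : Tendsto m atTop atTop) :
    Tendsto (fun i => alphaSig P (⨆ k ∈ Set.Icc 1 (m i), MeasurableSpace.comap (X k) inferInstance)
      (⨆ k ∈ Set.Ici (m i + i), MeasurableSpace.comap (X k) inferInstance)) atTop (𝓝 0) := by
  refine squeeze_zero' (.of_forall fun _ => alphaSig_nonneg) ?_ hmix
  filter_upwards [hm.eventually_ge_atTop 1] with i hi using alphaSig_le_alphaMix_s9 hi i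

lemma exists_subseq_tendsto_probConv_mulVecMap (hA : ∀ n, IsUnit (A n))
    (hmix : StronglyMixing (P : Measure Ω) X)
    (hinf : Infinitesimal (P : Measure Ω) A X)
    (hconv : Tendsto (normalizedSumLaw P hX A b) atTop (𝓝 μ)) {n : ℕ → ℕ}
    (hn : ∀ m, m ≤ n m) :
    ∃ φ : ℕ → ℕ, StrictMono φ ∧ ∃ ν : ℕ → ProbabilityMeasure (Fin d → ℝ),
      Tendsto (fun i => probConv (mulVecMap (A (n (φ i)) * (A (φ i))⁻¹)
        (normalizedSumLaw P hX A b (φ i))) (ν i)) atTop (𝓝 μ) := by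
  have hn_atTop : Tendsto n atTop atTop := tendsto_atTop_mono hn tendsto_id
  obtain ⟨φ, hφ, hgap⟩ := hinf.exists_subseq_tendstoInMeasure_gap id hn_atTop
  let C (i : ℕ) : Matrix (Fin d) (Fin d) ℝ := A (n (φ i)) * (A (φ i))⁻¹
  let U (i : ℕ) (ω : Ω) : Fin d → ℝ :=
    C i *ᵥ (A (φ i) *ᵥ partialSum X (φ i) ω + b (φ i))
  let V (i : ℕ) (ω : Ω) : Fin d → ℝ :=
    A (n (φ i)) *ᵥ ∑ j ∈ Finset.Ioc (φ i + i) (n (φ i)), X j ω +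
      (b (n (φ i)) - C i *ᵥ b (φ i))
  have hσ (s : Set ℕ) : ⨆ k ∈ s, MeasurableSpace.comap (X k) inferInstance ≤ ‹MeasurableSpace Ω› :=
    iSup₂_le fun k _ => (hX k).comap_le
  have hU (i : ℕ) :
      Measurable[⨆ k ∈ Set.Icc 1 (φ i), MeasurableSpace.comap (X k) inferInstance] (U i) :=
    (measurable_mulVec (C i)).comp <|
      measurable_mulVec_sum_add_iSup_comap (Finset.coe_Icc 1 (φ i)).subset _ _
  have hV (i : ℕ) :
      Measurable[⨆ k ∈ Set.Ici (φ i + i), MeasurableSpace.comap (X k) inferInstance] (V i) :=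
    measurable_mulVec_sum_add_iSup_comap (fun j hj => (Finset.mem_Ioc.1 hj).1.le) _ _
  have hU' (i : ℕ) : AEMeasurable (U i) P := ((hU i).mono (hσ _) le_rfl).aemeasurable
  have hV' (i : ℕ) : AEMeasurable (V i) P := ((hV i).mono (hσ _) le_rfl).aemeasurable
  have hsum : Tendsto (fun i => P.map ((hU' i).add (hV' i))) atTop (𝓝 μ) := by
    refine tendsto_map_of_tendstoInMeasure_sub_zero
      (fun i => (measurable_mulVec_partialSum_add hX (A (n (φ i))) _ _).aemeasurable) _
      (hconv.comp (hn_atTop.comp hφ.tendsto_atTop))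
      (hgap.congr_left fun i => .of_forall fun ω => ?_)
    exact (mulVec_partialSum_add_sub_eq_gap (hA _) (hn (φ i)) i ω).symm
  have hprod := tendsto_probConv_of_tendsto_alphaSig (fun _ => hσ _) (fun _ => hσ _) hU hV hU' hV'
    (hmix.tendsto_alphaSig hφ.tendsto_atTop) hsum
  have hUmap (i : ℕ) : P.map (hU' i) = mulVecMap (C i) (normalizedSumLaw P hX A b (φ i)) :=
    Subtype.ext <| (Measure.map_map (measurable_mulVec (C i))
      (measurable_mulVec_partialSum_add hX _ _ _)).symm
  simp only [hUmap] at hprod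
  exact ⟨φ, hφ, _, hprod⟩

lemma exists_subseq_tendsto_mul_inv_mem_UrbanikD (hA : ∀ n, IsUnit (A n))
    (hμ : IsFull (μ : Measure (Fin d → ℝ))) (hmix : StronglyMixing (P : Measure Ω) X)
    (hinf : Infinitesimal (P : Measure Ω) A X)
    (hconv : Tendsto (normalizedSumLaw P hX A b) atTop (𝓝 μ)) {n : ℕ → ℕ}
    (hn : ∀ m, m ≤ n m) :
    ∃ B ∈ UrbanikD (μ : Measure (Fin d → ℝ)), ∃ φ : ℕ → ℕ, StrictMono φ ∧
      Tendsto (fun k => A (n (φ k)) * (A (φ k))⁻¹) atTop (𝓝 B) := by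
  obtain ⟨φ, hφ, ν, hν⟩ := exists_subseq_tendsto_probConv_mulVecMap hA hmix hinf hconv hn
  obtain ⟨B, hB, ψ, hψ, hlim⟩ :=
    hμ.exists_subseq_tendsto_mem_UrbanikD (hconv.comp hφ.tendsto_atTop) hν
  exact ⟨B, hB, φ ∘ ψ, hφ.comp hψ, hlim⟩

/-- The semigroup `J D(μ) J` for `J ∈ D(μ)` idempotent: the elements `T` of `D(μ)` with
`J T = T J = T`. -/
def urbanikCorner (μ : ProbabilityMeasure (Fin d → ℝ)) (J : Matrix (Fin d) (Fin d) ℝ) :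
    Subsemigroup (Matrix (Fin d) (Fin d) ℝ) where
  carrier := UrbanikD (μ : Measure (Fin d → ℝ)) ∩ Subsemigroup.corner J
  mul_mem' hS hT := ⟨mul_mem_UrbanikD hS.1 hT.1, mul_mem hS.2 hT.2⟩

lemma mul_mul_mem_urbanikCorner {J B : Matrix (Fin d) (Fin d) ℝ}
    (hJ : J ∈ UrbanikD (μ : Measure (Fin d → ℝ))) (hB : B ∈ UrbanikD (μ : Measure (Fin d → ℝ))) :
    J * B * J ∈ urbanikCorner μ J :=
  ⟨mul_mem_UrbanikD (mul_mem_UrbanikD hJ hB) hJ, B, rfl⟩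

lemma IsFull.isCompact_urbanikCorner (hμ : IsFull (μ : Measure (Fin d → ℝ)))
    {J : Matrix (Fin d) (Fin d) ℝ} (hJ : IsIdempotentElem J) :
    IsCompact (urbanikCorner μ J : Set (Matrix (Fin d) (Fin d) ℝ)) := by
  have hcorner : (Subsemigroup.corner J : Set (Matrix (Fin d) (Fin d) ℝ)) =
      {T | J * T = T} ∩ {T | T * J = T} := Set.ext fun _ => Subsemigroup.mem_corner_iff hJ
  refine hμ.isCompact_UrbanikD.inter_right (hcorner ▸ ?_)
  exact (isClosed_eq (by fun_prop) continuous_id).inter (isClosed_eq (by fun_prop) continuous_id)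

/-- The elements of `D(μ)` that are compressed by the idempotent `J` and whose powers tend to
zero. -/
def urbanikContractions (μ : ProbabilityMeasure (Fin d → ℝ)) (J : Matrix (Fin d) (Fin d) ℝ) :
    Set (Matrix (Fin d) (Fin d) ℝ) :=
  {T | T ∈ urbanikCorner μ J ∧ IsTopologicallyNilpotent T}

lemma add_mem_urbanikContractions {J K S T : Matrix (Fin d) (Fin d) ℝ} (hJ : IsIdempotentElem J)
    (hK : IsIdempotentElem K) (hKJ : K ∈ urbanikCorner μ J) (hS : S ∈ urbanikContractions μ K)
    (hT : T ∈ urbanikContractions μ (J - K)) : S + T ∈ urbanikContractions μ J := by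
  obtain ⟨⟨hSD, hSK⟩, hS_nil⟩ := hS
  obtain ⟨⟨hTD, hTL⟩, hT_nil⟩ := hT
  have hTK : T ∈ Subsemigroup.corner (1 - K) :=
    corner_le_corner_of_mem (sub_mem_corner_one_sub hJ hK hKJ.2) hTL
  have hSJ := (Subsemigroup.mem_corner_iff hJ).1 (corner_le_corner_of_mem hKJ.2 hSK)
  have hTJ := (Subsemigroup.mem_corner_iff hJ).1
    (corner_le_corner_of_mem (sub_mem_corner hJ hKJ.2) hTL)
  obtain ⟨hKS_eq, hSK_eq⟩ := (Subsemigroup.mem_corner_iff hK).1 hSK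
  obtain ⟨hLT_eq, hTL_eq⟩ := (Subsemigroup.mem_corner_iff hK.one_sub).1 hTK
  have hST : S * T = 0 := by
    rw [← hSK_eq, ← hLT_eq, mul_assoc, ← mul_assoc K, hK.mul_one_sub_self, zero_mul, mul_zero]
  have hTS : T * S = 0 := by
    rw [← hTL_eq, ← hKS_eq, mul_assoc, ← mul_assoc _ K, hK.one_sub_mul_self, zero_mul, mul_zero]
  exact ⟨⟨add_mem_UrbanikD hK hKJ.1 hSD hSK hTD hTK, (Subsemigroup.mem_corner_iff hJ).2
    ⟨by rw [mul_add, hSJ.1, hTJ.1], by rw [add_mul, hSJ.2, hTJ.2]⟩⟩,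
    isTopologicallyNilpotent_add_of_mul_eq_zero hS_nil hT_nil hST hTS⟩

/-- An idempotent that is not minimal splits into two idempotents of smaller rank, and the sum of
contractions approximating the two summands approximates it. -/
lemma mem_closure_urbanikContractions_of_forall_minimal
    (hmin : ∀ J ∈ UrbanikD (μ : Measure (Fin d → ℝ)), IsIdempotentElem J → J ≠ 0 →
      (∀ K ∈ urbanikCorner μ J, IsIdempotentElem K → K = 0 ∨ K = J) →
        J ∈ closure (urbanikContractions μ J))
    {J : Matrix (Fin d) (Fin d) ℝ} (hJ : J ∈ UrbanikD (μ : Measure (Fin d → ℝ)))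
    (hJJ : IsIdempotentElem J) : J ∈ closure (urbanikContractions μ J) := by
  induction hr : J.rank using Nat.strong_induction_on generalizing J with
  | _ r ih =>
  subst hr
  rcases eq_or_ne J 0 with rfl | hJ₀
  · exact subset_closure ⟨⟨hJ, 0, by simp only [mul_zero]⟩, .zero⟩
  by_cases hJmin : ∀ K ∈ urbanikCorner μ J, IsIdempotentElem K → K = 0 ∨ K = J
  · exact hmin J hJ hJJ hJ₀ hJmin
  push Not at hJmin
  obtain ⟨K, hKJ, hKK, hK₀, hKne⟩ := hJmin
  obtain ⟨hJK_eq, hKJ_eq⟩ := (Subsemigroup.mem_corner_iff hJJ).1 hKJ.2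
  have hLD : J - K ∈ UrbanikD (μ : Measure (Fin d → ℝ)) := by
    simpa only [mul_sub, mul_one, hJK_eq] using
      mul_mem_UrbanikD hJ (one_sub_mem_UrbanikD hKK hKJ.1)
  have hLL : IsIdempotentElem (J - K) := hKK.sub hJJ hKJ_eq hJK_eq
  have hKclosure := ih _ (rank_lt_rank_of_mem_corner hJJ hKK hKJ.2 hKne) hKJ.1 hKK rfl
  have hLclosure := ih _ (rank_lt_rank_of_mem_corner hJJ hLL (sub_mem_corner hJJ hKJ.2)
    (sub_eq_self.not.2 hK₀)) hLD hLL rfl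
  rw [← add_sub_cancel K J]
  exact map_mem_closure₂ continuous_add hKclosure hLclosure fun S hS T hT => by
    simpa only [add_sub_cancel] using add_mem_urbanikContractions hJJ hKK hKJ hS hT

lemma tendsto_succ_mul_inv_of_tendsto_mul_inv (hA : ∀ n, IsUnit (A n))
    (hArat : Tendsto (fun n => A (n + 1) * (A n)⁻¹) atTop (𝓝 1)) {m n : ℕ → ℕ}
    (hn : Tendsto n atTop atTop) {B : Matrix (Fin d) (Fin d) ℝ}
    (hlim : Tendsto (fun k => A (n k) * (A (m k))⁻¹) atTop (𝓝 B)) :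
    Tendsto (fun k => A (n k + 1) * (A (m k))⁻¹) atTop (𝓝 B) := by
  have hmul := (hArat.comp hn).mul hlim
  rw [one_mul] at hmul
  refine hmul.congr fun k => ?_
  rw [Function.comp_apply, mul_assoc, ← mul_assoc (A (n k))⁻¹, inv_mul_eq_one_of_isUnit (hA _),
    one_mul]

lemma mem_closure_urbanikContractions (hA : ∀ n, IsUnit (A n))
    (hArat : Tendsto (fun n => A (n + 1) * (A n)⁻¹) atTop (𝓝 1))
    (hμ : IsFull (μ : Measure (Fin d → ℝ))) (hmix : StronglyMixing (P : Measure Ω) X)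
    (hinf : Infinitesimal (P : Measure Ω) A X)
    (hconv : Tendsto (normalizedSumLaw P hX A b) atTop (𝓝 μ)) {J : Matrix (Fin d) (Fin d) ℝ}
    (hJ : J ∈ UrbanikD (μ : Measure (Fin d → ℝ))) (hJJ : IsIdempotentElem J) :
    J ∈ closure (urbanikContractions μ J) := by
  refine mem_closure_urbanikContractions_of_forall_minimal
    (fun J hJ hJJ hJ₀ hmin => ?_) hJ hJJ
  have hJ_mem : J ∈ urbanikCorner μ J := by
    simpa only [hJJ.eq] using mul_mul_mem_urbanikCorner hJ hJ
  have hzero_mem : 0 ∈ urbanikCorner μ J := by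
    simpa only [mul_zero, zero_mul] using mul_mul_mem_urbanikCorner hJ zero_mem_UrbanikD
  refine mem_closure_isTopologicallyNilpotent (hμ.isCompact_urbanikCorner hJJ) hzero_mem hJ_mem
    hJJ hJ₀ hmin (F := fun m n => J * (A n * (A m)⁻¹) * J) (fun m => ?_) (fun m => ?_)
    fun n hn => ?_
  · rw [mul_nonsing_inv _ ((isUnit_iff_isUnit_det _).1 (hA m)), mul_one, hJJ.eq]
  · have hA₀ := (tendsto_zero_of_tendsto_normalizedSumLaw hA hμ hinf hconv).mul_const (A m)⁻¹
    have hlim := (hA₀.const_mul J).mul_const J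
    simp only [zero_mul, mul_zero] at hlim
    exact hlim
  · obtain ⟨B, hB, φ, hφ, hlim⟩ :=
      exists_subseq_tendsto_mul_inv_mem_UrbanikD hA hμ hmix hinf hconv hn
    have hn_atTop : Tendsto (fun k => n (φ k)) atTop atTop :=
      (tendsto_atTop_mono hn tendsto_id).comp hφ.tendsto_atTop
    have hlim_succ := tendsto_succ_mul_inv_of_tendsto_mul_inv hA hArat hn_atTop hlim
    exact ⟨_, mul_mul_mem_urbanikCorner hJ hB, φ, (hlim.const_mul J).mul_const J,
      (hlim_succ.const_mul J).mul_const J⟩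

end NormalizedSums

/-- **Lemma 3.** Under strong mixing, infinitesimality, weak convergence to a full law,
with invertible `A_n` satisfying `A_{n+1} A_n⁻¹ → I`: for every nonzero idempotent
`J ∈ D(μ)` there are `T_n ∈ D(μ)` with `J T_n = T_n J = T_n`, `T_n → J`, and
`T_n^k → 0` as `k → ∞` for each fixed `n`. -/
theorem exists_approximating_contractions
    {d : ℕ} {Ω : Type*} [MeasurableSpace Ω] (P : Measure Ω) [IsProbabilityMeasure P]
    (X : ℕ → Ω → (Fin d → ℝ)) (hXmeas : ∀ j, Measurable (X j))
    (A : ℕ → Matrix (Fin d) (Fin d) ℝ) (hAinv : ∀ n, IsUnit (A n)) (b : ℕ → Fin d → ℝ)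
    (hArat : Tendsto (fun n => A (n + 1) * (A n)⁻¹) atTop (𝓝 1))
    (μ : Measure (Fin d → ℝ)) [IsProbabilityMeasure μ] (hfull : IsFull μ)
    (hmix : StronglyMixing P X)
    (hinf : Infinitesimal P A X)
    (hconv : WeakLim (fun n => P.map (fun ω => (A n).mulVec (partialSum X n ω) + b n)) μ) :
    ∀ J ∈ UrbanikD μ, J ≠ 0 → J * J = J →
      ∃ T : ℕ → Matrix (Fin d) (Fin d) ℝ,
        (∀ n, T n ∈ UrbanikD μ) ∧
        (∀ n, J * T n = T n) ∧ (∀ n, T n * J = T n) ∧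
        Tendsto T atTop (𝓝 J) ∧
        ∀ n, Tendsto (fun k => T n ^ k) atTop (𝓝 0) := by
  intro J hJ _ hJJ
  let P' : ProbabilityMeasure Ω := ⟨P, inferInstance⟩
  let μ' : ProbabilityMeasure (Fin d → ℝ) := ⟨μ, inferInstance⟩
  have hlaw : Tendsto (normalizedSumLaw P' hXmeas A b) atTop (𝓝 μ') := weakLim_iff_tendsto.1 hconv
  have hclosure : J ∈ closure (urbanikContractions μ' J) :=
    mem_closure_urbanikContractions (P := P') (μ := μ') hAinv hArat hfull hmix hinf hlaw hJ hJJ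
  obtain ⟨T, hT, hTJ⟩ := mem_closure_iff_seq_limit.1 hclosure
  have hcorner n := (Subsemigroup.mem_corner_iff hJJ).1 (hT n).1.2
  exact ⟨T, fun n => (hT n).1.1, fun n => (hcorner n).1, fun n => (hcorner n).2, hTJ,
    fun n => (hT n).2⟩
end

section
/- Let (b_{m,n}) be a doubly indexed family of real numbers defined for integers 1 ≤ n ≤ m, satisfying: b_{n,n} = 1 for every n; for each fixed n, b_{m,n} → 0 as m → ∞; and sup_{1≤n≤m} |b_{m+1,n} − b_{m,n}| → 0 as m → ∞. Then for every c with 0 < c < 1, the integer m_n := max{k ≥ n : b_{k,n} ≥ c} is well defined for each n (the set is nonempty and bounded above), and b_{m_n, n} → c as n → ∞. -/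
open Filter Topology

/-!
If `m` is the last index with `c ≤ u m`, then `u (m + 1) < c ≤ u m`, so `u m` exceeds `c` by less
than the drop `u m - u (m + 1)`. For the column `k ↦ b k n` this index is at least `n`, so by
uniformity in the column the drop there becomes arbitrarily small as `n → ∞`.
-/

theorem bddAbove_setOf_le_of_eventually_lt {ι α : Type*} [LinearOrder ι] [Nonempty ι]
    [Preorder α] {u : ι → α} {c : α} (hlt : ∀ᶠ k in atTop, u k < c) :
    BddAbove {k | c ≤ u k} := by
  obtain ⟨N, hN⟩ := eventually_atTop.1 hlt
  exact ⟨N, fun k hk ↦ not_lt.1 fun hNk ↦ (hN k hNk.le).not_ge hk⟩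

section LastIndex

variable {α : Type*} {u : ℕ → α} {c : α} {n m : ℕ}

theorem isGreatest_sSup_setOf_le_of_eventually_lt [Preorder α] (hn : c ≤ u n)
    (hlt : ∀ᶠ k in atTop, u k < c) :
    IsGreatest {k | n ≤ k ∧ c ≤ u k} (sSup {k | n ≤ k ∧ c ≤ u k}) := by
  have hbdd : BddAbove {k | n ≤ k ∧ c ≤ u k} :=
    (bddAbove_setOf_le_of_eventually_lt hlt).mono fun _ hk ↦ hk.2
  exact ⟨Nat.sSup_mem ⟨n, le_rfl, hn⟩ hbdd, fun _ ↦ le_csSup hbdd⟩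

theorem apply_succ_lt_of_isGreatest [LinearOrder α] (hm : IsGreatest {k | n ≤ k ∧ c ≤ u k} m) :
    u (m + 1) < c := by
  by_contra! hc
  exact m.not_succ_le_self (hm.2 ⟨hm.1.1.trans m.le_succ, hc⟩)

end LastIndex

section OrderedGroup

variable {α : Type*} [AddCommGroup α] [LinearOrder α] [IsOrderedAddMonoid α]

theorem abs_apply_sub_lt_of_isGreatest {u : ℕ → α} {c : α} {n m : ℕ}
    (hm : IsGreatest {k | n ≤ k ∧ c ≤ u k} m) : |u m - c| < u m - u (m + 1) := by
  rw [abs_of_nonneg (sub_nonneg.2 hm.1.2)]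
  exact sub_lt_sub_left (apply_succ_lt_of_isGreatest hm) _

variable [TopologicalSpace α] [OrderTopology α]

theorem tendsto_apply_of_isGreatest {ι : Type*} {l : Filter ι} {u : ι → ℕ → α} {c : α}
    {s m : ι → ℕ} (hm : ∀ᶠ i in l, IsGreatest {k | s i ≤ k ∧ c ≤ u i k} (m i))
    (hdrop : ∀ ε > 0, ∀ᶠ i in l, u i (m i) - u i (m i + 1) < ε) :
    Tendsto (fun i ↦ u i (m i)) l (𝓝 c) := by
  refine LinearOrderedAddCommGroup.tendsto_nhds.2 fun ε hε ↦ ?_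
  filter_upwards [hm, hdrop ε hε] with i hmi hdropi
  exact (abs_apply_sub_lt_of_isGreatest hmi).trans hdropi

theorem crossing_index_tendsto_general {b : ℕ → ℕ → α} {c : α}
    (hdiag : ∀ n, 1 ≤ n → c ≤ b n n)
    (hlt : ∀ n, 1 ≤ n → ∀ᶠ m in atTop, b m n < c)
    (hdrop : ∀ ε > 0, ∀ᶠ m in atTop, ∀ n, 1 ≤ n → n ≤ m → b m n - b (m + 1) n < ε) :
    (∀ n, 1 ≤ n →
        ({k | n ≤ k ∧ c ≤ b k n}.Nonempty ∧ BddAbove {k | n ≤ k ∧ c ≤ b k n})) ∧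
      Tendsto (fun n ↦ b (sSup {k | n ≤ k ∧ c ≤ b k n}) n) atTop (𝓝 c) := by
  have hmax (n : ℕ) (hn : 1 ≤ n) :
      IsGreatest {k | n ≤ k ∧ c ≤ b k n} (sSup {k | n ≤ k ∧ c ≤ b k n}) :=
    isGreatest_sSup_setOf_le_of_eventually_lt (u := (b · n)) (hdiag n hn) (hlt n hn)
  refine ⟨fun n hn ↦ ⟨(hmax n hn).nonempty, (hmax n hn).bddAbove⟩,
    tendsto_apply_of_isGreatest (u := fun n k ↦ b k n)
      ((eventually_ge_atTop 1).mono hmax) fun ε hε ↦ ?_⟩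
  filter_upwards [eventually_forall_ge_atTop.2 (hdrop ε hε), eventually_ge_atTop 1] with n hdropn hn
  have hle : n ≤ sSup {k | n ≤ k ∧ c ≤ b k n} := (hmax n hn).1.1
  exact hdropn _ hle n hn hle

end OrderedGroup

/-- For a doubly indexed array `(b_{m,n})_{1 ≤ n ≤ m}` with `b_{n,n} = 1`,
`b_{m,n} → 0` as `m → ∞` for each fixed `n`, and
`sup_{1 ≤ n ≤ m} |b_{m+1,n} - b_{m,n}| → 0`: for `0 < c < 1` the index
`m_n := max {k ≥ n : b_{k,n} ≥ c}` is well defined and `b_{m_n,n} → c` as `n → ∞`. -/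
theorem crossing_index_tendsto
    (b : ℕ → ℕ → ℝ)
    (hdiag : ∀ n, 1 ≤ n → b n n = 1)
    (hlim : ∀ n, 1 ≤ n → Tendsto (fun m => b m n) atTop (𝓝 0))
    (hunif : ∀ ε > (0 : ℝ), ∃ M : ℕ, ∀ m ≥ M, ∀ n, 1 ≤ n → n ≤ m →
      |b (m + 1) n - b m n| < ε)
    (c : ℝ) (hc0 : 0 < c) (hc1 : c < 1) :
    (∀ n, 1 ≤ n →
        ({k | n ≤ k ∧ c ≤ b k n}.Nonempty ∧ BddAbove {k | n ≤ k ∧ c ≤ b k n})) ∧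
      Tendsto (fun n => b (sSup {k | n ≤ k ∧ c ≤ b k n}) n) atTop (𝓝 c) := by
  exact crossing_index_tendsto_general (fun n hn ↦ (hdiag n hn).symm ▸ hc1.le)
    (fun n hn ↦ (hlim n hn).eventually_lt_const hc0)
    fun ε hε ↦ (eventually_atTop.2 (hunif ε hε)).mono fun m hm n hn hnm ↦
      (abs_sub_lt_iff.1 (hm n hn hnm)).2
end
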